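/- arXiv:0705.2871 — 4 statements merged into one kernel-verified Lean document; each statement's English description precedes it below -/
import Mathlib

section
/- Let a : (0,∞) → ℝ satisfy ∫₀^R a(r)² r dr < ∞ for every R > 0 and a(r) → +∞ as r → ∞, and suppose a is continuously differentiable for all sufficiently large r with b(r) := a'(r) → 0 as r → ∞. Then for every n ≥ 1 and every integer m, lim_{k → +∞} μ_{n,m}(−k) = 0. -/
open MeasureTheory Set Filter

noncomputable section

/-- A radial test function: smooth, compactly supported, with support in `(0,∞)`. -/
def IsTestR (g : ℝ → ℝ) : Prop :=
  ContDiff ℝ (⊤ : ℕ∞) g ∧ HasCompactSupport g ∧ tsupport g ⊆ Set.Ioi 0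

/-- The quadratic form
`l_m[g;p] = ∫₀^∞ (|g'|² + (m² - 1/4) r⁻² |g|² + (a(r)+p)² |g|²) dr`
of the fiber operator `L_m(p)` in `L²((0,∞))`. -/
def lForm (a : ℝ → ℝ) (m : ℤ) (p : ℝ) (g : ℝ → ℝ) : ℝ :=
  ∫ r in Set.Ioi (0:ℝ),
    ((deriv g r) ^ 2 + ((m : ℝ) ^ 2 - 1/4) * r⁻¹ ^ 2 * (g r) ^ 2
      + (a r + p) ^ 2 * (g r) ^ 2)

/-- The `n`-th min-max value `μ_{n,m}(p)`: the infimum, over `n`-dimensional subspaces `V` of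
`C_c^∞((0,∞))`, of the supremum of the Rayleigh quotient `l_m[g;p]/‖g‖²` over nonzero `g ∈ V`. -/
def muRadial (a : ℝ → ℝ) (m : ℤ) (n : ℕ) (p : ℝ) : ℝ :=
  sInf {S : ℝ | ∃ f : Fin n → (ℝ → ℝ), (∀ i, IsTestR (f i)) ∧ LinearIndependent ℝ f ∧
    S = sSup {R : ℝ | ∃ g : ℝ → ℝ, g ∈ Submodule.span ℝ (Set.range f) ∧ g ≠ 0 ∧
      R = lForm a m p g / ∫ r in Set.Ioi (0:ℝ), (g r) ^ 2}}

/-!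
Hardy's inequality makes every form `l_m[·;p]` nonnegative on test functions, so `μ_{n,m} ≥ 0`.
For the matching upper bound, `a` takes each large value `k` at some large `s`, and since `a` varies
little on windows of fixed length, both `(a - k)²` and `(m² - 1/4) / r²` are small on `[s, s + T]`.
If `T` is large, the window holds `n` disjoint translates of a wide bump whose Dirichlet energy is
small relative to its `L²` norm, and their span is an `n`-dimensional space on which the Rayleigh
quotient is small.
-/

/-! ### Comparing possibly undefined integrals -/

section Integral

variable {α : Type*} [MeasurableSpace α] {μ : Measure α} {f g : α → ℝ}

/- Only one of the two functions is assumed integrable: if the other one is not,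
its Bochner integral is `0` and the conclusion still holds. -/

lemma integral_nonneg_of_integrable_le (hf : Integrable f μ) (hfg : f ≤ᵐ[μ] g)
    (h0 : 0 ≤ ∫ x, f x ∂μ) : 0 ≤ ∫ x, g x ∂μ := by
  by_cases hg : Integrable g μ
  · exact h0.trans (integral_mono_ae hf hg hfg)
  · exact (integral_undef hg).ge

lemma integral_le_integral_of_le_integrable (hg : Integrable g μ) (hfg : f ≤ᵐ[μ] g)
    (h0 : 0 ≤ ∫ x, g x ∂μ) : ∫ x, f x ∂μ ≤ ∫ x, g x ∂μ := by
  by_cases hf : Integrable f μ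
  · exact integral_mono_ae hf hg hfg
  · exact (integral_undef hf).trans_le h0

end Integral

lemma hasCompactSupport_sq {X R : Type*} [TopologicalSpace X] [MonoidWithZero R] {f : X → R}
    (hc : HasCompactSupport f) : HasCompactSupport fun x => f x ^ 2 := by
  simp only [sq]
  exact hc.mul_right

lemma integrable_sq_of_hasCompactSupport {X : Type*} [TopologicalSpace X] [MeasurableSpace X]
    [OpensMeasurableSpace X] {μ : Measure X} [IsFiniteMeasureOnCompacts μ] {f : X → ℝ}
    (hf : Continuous f) (hc : HasCompactSupport f) : Integrable (fun x => f x ^ 2) μ :=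
  (hf.pow 2).integrable_of_hasCompactSupport (hasCompactSupport_sq hc)

/-! ### Radial test functions -/

namespace IsTestR

variable {g φ : ℝ → ℝ}

lemma contDiff (hg : IsTestR g) : ContDiff ℝ (⊤ : ℕ∞) g := hg.1

lemma hasCompactSupport (hg : IsTestR g) : HasCompactSupport g := hg.2.1

lemma tsupport_subset (hg : IsTestR g) : tsupport g ⊆ Ioi 0 := hg.2.2

lemma of_tsupport_subset_Icc {s t : ℝ} (hg : ContDiff ℝ (⊤ : ℕ∞) g) (hs : 0 < s)
    (hst : tsupport g ⊆ Icc s t) : IsTestR g :=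
  ⟨hg, isCompact_Icc.of_isClosed_subset (isClosed_tsupport g) hst,
    fun _ hr => hs.trans_le (hst hr).1⟩

lemma of_mem_span {F : Set (ℝ → ℝ)} (hF : ∀ f ∈ F, IsTestR f) (hg : g ∈ Submodule.span ℝ F) :
    IsTestR g := by
  induction hg using Submodule.span_induction with
  | mem f hf => exact hF f hf
  | zero => exact ⟨contDiff_const, .zero, by simp⟩
  | add f₁ f₂ _ _ h₁ h₂ =>
    exact ⟨h₁.contDiff.add h₂.contDiff, h₁.hasCompactSupport.add h₂.hasCompactSupport,
      (tsupport_add f₁ f₂).trans (union_subset h₁.tsupport_subset h₂.tsupport_subset)⟩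
  | smul c f _ h =>
    exact ⟨h.contDiff.const_smul c, h.hasCompactSupport.smul_left (f := fun _ => c),
      (tsupport_smul_subset_right (fun _ => c) f).trans h.tsupport_subset⟩

protected lemma deriv (hg : IsTestR g) : IsTestR (deriv g) :=
  ⟨(contDiff_infty_iff_deriv.1 hg.contDiff).2, hg.hasCompactSupport.deriv,
    (closure_minimal support_deriv_subset (isClosed_tsupport g)).trans hg.tsupport_subset⟩

lemma mul_contDiffOn (hg : IsTestR g) (hφ : ContDiffOn ℝ (⊤ : ℕ∞) φ (Ioi 0)) :
    IsTestR fun r => g r * φ r := by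
  have hsub : tsupport (fun r => g r * φ r) ⊆ Ioi 0 :=
    tsupport_mul_subset_left.trans hg.tsupport_subset
  refine ⟨(contMDiff_of_tsupport fun r hr => ContDiffAt.contMDiffAt ?_).contDiff,
    hg.hasCompactSupport.mul_right, hsub⟩
  exact hg.contDiff.contDiffAt.mul (hφ.contDiffAt (Ioi_mem_nhds (hsub hr)))

lemma eq_zero_of_nonpos (hg : IsTestR g) {r : ℝ} (hr : r ≤ 0) : g r = 0 :=
  image_eq_zero_of_notMem_tsupport fun h => hr.not_gt (hg.tsupport_subset h)

lemma differentiable (hg : IsTestR g) : Differentiable ℝ g := hg.contDiff.differentiable (by simp)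

lemma integrable_sq (hg : IsTestR g) : Integrable fun r => g r ^ 2 :=
  integrable_sq_of_hasCompactSupport hg.contDiff.continuous hg.hasCompactSupport

lemma setIntegral_sq (hg : IsTestR g) : ∫ r in Ioi 0, g r ^ 2 = ∫ r, g r ^ 2 :=
  setIntegral_eq_integral_of_forall_compl_eq_zero fun _ hr => by
    rw [hg.eq_zero_of_nonpos (not_lt.mp hr), zero_pow two_ne_zero]

lemma setIntegral_deriv (hg : IsTestR g) : ∫ r in Ioi 0, deriv g r = 0 := by
  rw [hg.hasCompactSupport.integral_Ioi_deriv_eq (hg.contDiff.of_le (by simp)),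
    hg.eq_zero_of_nonpos le_rfl, neg_zero]

protected lemma mul_inv (hg : IsTestR g) : IsTestR fun r => g r * r⁻¹ :=
  hg.mul_contDiffOn (contDiffOn_inv ℝ |>.mono fun _ hr => ne_of_gt hr)

/- Completing the square: `g'² = (g' - g / (2r))² + (g² / (2r))' + g² / (4r²)`. -/
lemma deriv_sq_eq (hg : IsTestR g) {r : ℝ} (hr : 0 < r) :
    deriv g r ^ 2 = (deriv g r - 2⁻¹ * (g r * r⁻¹)) ^ 2
      + deriv (fun x => g x * (2⁻¹ * (g x * x⁻¹))) r + 1 / 4 * (g r * r⁻¹) ^ 2 := by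
  have hgr := (hg.differentiable r).hasDerivAt
  have hw := hgr.fun_mul ((hgr.fun_mul (hasDerivAt_inv hr.ne')).const_mul 2⁻¹)
  rw [hw.deriv]
  field

theorem hardy (hg : IsTestR g) :
    1 / 4 * ∫ r in Ioi 0, (g r * r⁻¹) ^ 2 ≤ ∫ r in Ioi 0, deriv g r ^ 2 := by
  let w : ℝ → ℝ := fun r => g r * (2⁻¹ * (g r * r⁻¹))
  have hw : IsTestR w := hg.mul_contDiffOn (contDiff_const.mul hg.mul_inv.contDiff).contDiffOn
  have hwi : IntegrableOn (deriv w) (Ioi 0) :=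
    (hw.deriv.contDiff.continuous.integrable_of_hasCompactSupport
      hw.deriv.hasCompactSupport).integrableOn
  have hsqi : IntegrableOn (fun r => (deriv g r - 2⁻¹ * (g r * r⁻¹)) ^ 2) (Ioi 0) :=
    (integrable_sq_of_hasCompactSupport
      (hg.deriv.contDiff.continuous.sub (continuous_const.mul hg.mul_inv.contDiff.continuous))
      (hg.deriv.hasCompactSupport.sub hg.mul_inv.hasCompactSupport.mul_left)).integrableOn
  calc 1 / 4 * ∫ r in Ioi 0, (g r * r⁻¹) ^ 2
      ≤ (∫ r in Ioi 0, (deriv g r - 2⁻¹ * (g r * r⁻¹)) ^ 2) + (∫ r in Ioi 0, deriv w r)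
        + 1 / 4 * ∫ r in Ioi 0, (g r * r⁻¹) ^ 2 := by
        rw [hw.setIntegral_deriv, add_zero]
        exact le_add_of_nonneg_left (integral_nonneg fun _ => sq_nonneg _)
    _ = ∫ r in Ioi 0, deriv g r ^ 2 := by
        rw [← integral_const_mul, ← integral_add hsqi hwi, ← integral_add]
        · exact setIntegral_congr_fun measurableSet_Ioi fun r hr => (hg.deriv_sq_eq hr).symm
        exacts [hsqi.add hwi, hg.mul_inv.integrable_sq.integrableOn.const_mul _]

end IsTestR

/-! ### Min-max values -/

/-- The supremum of the Rayleigh quotients `l_m[g;p] / ‖g‖²` over the nonzero elements `g` of a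
space `V` of test functions, so that `muRadial` is the infimum of its values on spans of
independent `n`-tuples. It is real-valued, hence `0` if the quotients are unbounded on `V`. -/
def rayleighSup (a : ℝ → ℝ) (m : ℤ) (p : ℝ) (V : Submodule ℝ (ℝ → ℝ)) : ℝ :=
  sSup {R : ℝ | ∃ g : ℝ → ℝ, g ∈ V ∧ g ≠ 0 ∧
    R = lForm a m p g / ∫ r in Ioi (0 : ℝ), (g r) ^ 2}

section MinMax

variable {a : ℝ → ℝ} {m : ℤ} {p : ℝ}

lemma lForm_nonneg {g : ℝ → ℝ} (hg : IsTestR g) : 0 ≤ lForm a m p g := by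
  have hd := hg.deriv.integrable_sq.integrableOn (s := Ioi 0)
  have hq := (hg.mul_inv.integrable_sq.integrableOn (s := Ioi 0)).const_mul (1 / 4)
  refine integral_nonneg_of_integrable_le (hd.sub hq) (.of_forall fun r => ?_) ?_
  · have hm : 0 ≤ (m : ℝ) ^ 2 * (g r * r⁻¹) ^ 2 := by positivity
    have ha : 0 ≤ (a r + p) ^ 2 * g r ^ 2 := by positivity
    simp only [Pi.sub_apply]
    linarith
  · simpa only [Pi.sub_apply, integral_sub hd hq, integral_const_mul, sub_nonneg] using hg.hardy

lemma lForm_le {g : ℝ → ℝ} (hg : IsTestR g) {η : ℝ} (hη : 0 ≤ η)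
    (hV : ∀ r ∈ Function.support g, ((m : ℝ) ^ 2 - 1 / 4) * r⁻¹ ^ 2 + (a r + p) ^ 2 ≤ η) :
    lForm a m p g ≤ (∫ r, deriv g r ^ 2) + η * ∫ r, g r ^ 2 := by
  have hd := hg.deriv.integrable_sq.integrableOn (s := Ioi 0)
  have hg2 := (hg.integrable_sq.integrableOn (s := Ioi 0)).const_mul η
  rw [← hg.deriv.setIntegral_sq, ← hg.setIntegral_sq, ← integral_const_mul, ← integral_add hd hg2]
  refine integral_le_integral_of_le_integrable (hd.add hg2) (.of_forall fun r => ?_)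
    (integral_nonneg fun r => by positivity)
  by_cases hr : g r = 0
  · simp [hr]
  · linarith [mul_le_mul_of_nonneg_right (hV r hr) (sq_nonneg (g r))]

lemma rayleighSup_nonneg {V : Submodule ℝ (ℝ → ℝ)} (hV : ∀ g ∈ V, IsTestR g) :
    0 ≤ rayleighSup a m p V := by
  refine Real.sSup_nonneg ?_
  rintro _ ⟨g, hg, -, rfl⟩
  exact div_nonneg (lForm_nonneg (hV g hg)) (integral_nonneg fun _ => sq_nonneg _)

lemma rayleighSup_le {V : Submodule ℝ (ℝ → ℝ)} {C : ℝ} (hC : 0 ≤ C)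
    (h : ∀ g ∈ V, lForm a m p g ≤ C * ∫ r in Ioi 0, g r ^ 2) : rayleighSup a m p V ≤ C := by
  refine Real.sSup_le ?_ hC
  rintro _ ⟨g, hg, -, rfl⟩
  exact div_le_of_le_mul₀ (integral_nonneg fun _ => sq_nonneg _) hC (h g hg)

lemma rayleighSup_span_nonneg {n : ℕ} {f : Fin n → ℝ → ℝ} (hf : ∀ i, IsTestR (f i)) :
    0 ≤ rayleighSup a m p (Submodule.span ℝ (range f)) :=
  rayleighSup_nonneg fun _ hg => .of_mem_span (forall_mem_range.2 hf) hg

lemma muRadial_nonneg {n : ℕ} : 0 ≤ muRadial a m n p := by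
  refine Real.sInf_nonneg ?_
  rintro _ ⟨f, hf, -, rfl⟩
  exact rayleighSup_span_nonneg hf

lemma muRadial_le_rayleighSup {n : ℕ} {f : Fin n → ℝ → ℝ} (hf : ∀ i, IsTestR (f i))
    (hli : LinearIndependent ℝ f) :
    muRadial a m n p ≤ rayleighSup a m p (Submodule.span ℝ (range f)) := by
  refine csInf_le ⟨0, ?_⟩ ⟨f, hf, hli, rfl⟩
  rintro _ ⟨f', hf', -, rfl⟩
  exact rayleighSup_span_nonneg hf'

end MinMax

/-! ### Families with disjoint supports -/

lemma sq_sum_of_pairwise_mul_eq_zero {ι R : Type*} [Fintype ι] [Semiring R] {x : ι → R}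
    (hx : Pairwise fun i j => x i * x j = 0) : (∑ i, x i) ^ 2 = ∑ i, x i ^ 2 := by
  rw [sq, Finset.sum_mul_sum]
  refine Finset.sum_congr rfl fun i _ => ?_
  rw [Finset.sum_eq_single_of_mem i (Finset.mem_univ i) fun j _ hj => hx hj.symm, sq]

lemma mul_eq_zero_of_disjoint_support {α R : Type*} [MulZeroClass R] {f g : α → R}
    (h : Disjoint (Function.support f) (Function.support g)) (x : α) : f x * g x = 0 := by
  by_cases hf : f x = 0
  · rw [hf, zero_mul]
  · rw [Function.notMem_support.1 (disjoint_left.1 h hf), mul_zero]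

lemma linearIndependent_of_pairwise_disjoint_support {ι α K : Type*} [Ring K] [NoZeroDivisors K]
    {f : ι → α → K} (hne : ∀ i, f i ≠ 0)
    (hdisj : Pairwise fun i j => Disjoint (Function.support (f i)) (Function.support (f j))) :
    LinearIndependent K f := by
  rw [linearIndependent_iff']
  intro s c hc i hi
  obtain ⟨x, hx⟩ := Function.ne_iff.1 (hne i)
  have hfj : ∀ j ∈ s, j ≠ i → (c j • f j) x = 0 := fun j _ hji => by
    rw [Pi.smul_apply, Function.notMem_support.1 (disjoint_left.1 (hdisj hji.symm) hx), smul_zero]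
  have hcx := congrFun hc x
  rw [Finset.sum_apply, Finset.sum_eq_single_of_mem i hi hfj] at hcx
  exact (mul_eq_zero.1 hcx).resolve_right hx

lemma integral_sq_sum_of_pairwise_disjoint_support {ι α : Type*} [Fintype ι] [MeasurableSpace α]
    {μ : Measure α} {f : ι → α → ℝ} (hint : ∀ i, Integrable (fun x => f i x ^ 2) μ)
    (hdisj : Pairwise fun i j => Disjoint (Function.support (f i)) (Function.support (f j))) :
    ∫ x, (∑ i, f i x) ^ 2 ∂μ = ∑ i, ∫ x, f i x ^ 2 ∂μ := by
  rw [← integral_finsetSum _ fun i _ => hint i]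
  refine integral_congr_ae (.of_forall fun x => ?_)
  exact sq_sum_of_pairwise_mul_eq_zero fun i j hij => mul_eq_zero_of_disjoint_support (hdisj hij) x

lemma support_subset_of_mem_span {α R : Type*} [Semiring R] {F : Set (α → R)} {W : Set α}
    (hF : ∀ f ∈ F, Function.support f ⊆ W) {g : α → R} (hg : g ∈ Submodule.span R F) :
    Function.support g ⊆ W := by
  induction hg using Submodule.span_induction with
  | mem f hf => exact hF f hf
  | zero => simp
  | add f₁ f₂ _ _ h₁ h₂ => exact (Function.support_add f₁ f₂).trans (union_subset h₁ h₂)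
  | smul c f _ h => exact (Function.support_const_smul_subset c f).trans h

section DisjointFamily

variable {ι : Type*} {f : ι → ℝ → ℝ} {ε : ℝ}

lemma integral_deriv_sq_sum_le [Fintype ι] (hf : ∀ i, ContDiff ℝ 1 (f i))
    (hc : ∀ i, HasCompactSupport (f i))
    (hdisj : Pairwise fun i j => Disjoint (tsupport (f i)) (tsupport (f j)))
    (hε : ∀ i, ∫ x, deriv (f i) x ^ 2 ≤ ε * ∫ x, f i x ^ 2) :
    ∫ x, deriv (fun y => ∑ i, f i y) x ^ 2 ≤ ε * ∫ x, (∑ i, f i x) ^ 2 := by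
  have hderiv : deriv (fun y => ∑ i, f i y) = fun x => ∑ i, deriv (f i) x :=
    funext fun x => deriv_fun_sum fun i _ => (hf i).differentiable one_ne_zero x
  rw [hderiv, integral_sq_sum_of_pairwise_disjoint_support
      (fun i => integrable_sq_of_hasCompactSupport ((hf i).continuous_deriv le_rfl) (hc i).deriv)
      fun i j hij => (hdisj hij).mono support_deriv_subset support_deriv_subset,
    integral_sq_sum_of_pairwise_disjoint_support
      (fun i => integrable_sq_of_hasCompactSupport (hf i).continuous (hc i))
      fun i j hij => (hdisj hij).mono (subset_tsupport _) (subset_tsupport _), Finset.mul_sum]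
  exact Finset.sum_le_sum fun i _ => hε i

lemma integral_deriv_sq_le_of_mem_span [Finite ι] (hf : ∀ i, ContDiff ℝ 1 (f i))
    (hc : ∀ i, HasCompactSupport (f i))
    (hdisj : Pairwise fun i j => Disjoint (tsupport (f i)) (tsupport (f j)))
    (hε : ∀ i, ∫ x, deriv (f i) x ^ 2 ≤ ε * ∫ x, f i x ^ 2)
    {g : ℝ → ℝ} (hg : g ∈ Submodule.span ℝ (range f)) :
    ∫ x, deriv g x ^ 2 ≤ ε * ∫ x, g x ^ 2 := by
  have := Fintype.ofFinite ι
  obtain ⟨c, rfl⟩ := (Submodule.mem_span_range_iff_exists_fun ℝ).1 hg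
  have hsub (i) : tsupport (fun x => c i * f i x) ⊆ tsupport (f i) := tsupport_mul_subset_right
  have hsum : (∑ i, c i • f i) = fun x => ∑ i, c i * f i x := by
    ext x; simp
  rw [hsum]
  refine integral_deriv_sq_sum_le (fun i => contDiff_const.mul (hf i)) (fun i => (hc i).mul_left)
    (fun i j hij => (hdisj hij).mono (hsub i) (hsub j)) fun i => ?_
  simp only [deriv_const_mul_field, mul_pow, integral_const_mul]
  rw [mul_left_comm]
  exact mul_le_mul_of_nonneg_left (hε i) (sq_nonneg _)

end DisjointFamily

/-! ### Wide bumps -/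

lemma integral_deriv_sq_comp_mul_left (φ : ℝ → ℝ) (c : ℝ) :
    ∫ x, deriv (fun y => φ (c * y)) x ^ 2 = c ^ 2 * (|c⁻¹| * ∫ x, deriv φ x ^ 2) := by
  simp only [deriv_comp_mul_left, smul_eq_mul, mul_pow, integral_const_mul]
  rw [Measure.integral_comp_mul_left (fun x => deriv φ x ^ 2), smul_eq_mul]

lemma exists_bump_integral_deriv_sq_le {ε : ℝ} (hε : 0 < ε) :
    ∃ ψ : ℝ → ℝ, ContDiff ℝ (⊤ : ℕ∞) ψ ∧ HasCompactSupport ψ ∧ ψ ≠ 0 ∧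
      ∫ x, deriv ψ x ^ 2 ≤ ε * ∫ x, ψ x ^ 2 := by
  let φ : ContDiffBump (0 : ℝ) := default
  have hφ0 : φ 0 ≠ 0 := (φ.pos_of_mem_ball (Metric.mem_ball_self φ.rOut_pos)).ne'
  set A := ∫ x, deriv φ x ^ 2
  set B := ∫ x, φ x ^ 2
  have hA : 0 < A + 1 := add_pos_of_nonneg_of_pos (integral_nonneg fun _ => sq_nonneg _) one_pos
  have hB : 0 < B := (φ.continuous.pow 2).integral_pos_of_hasCompactSupport_nonneg_nonzero
    (hasCompactSupport_sq φ.hasCompactSupport)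
    (fun _ => sq_nonneg _) (pow_ne_zero 2 hφ0)
  obtain ⟨c, hc, hcA⟩ : ∃ c > 0, c ^ 2 * A ≤ ε * B := by
    have hpos : 0 < ε * B / (A + 1) := div_pos (mul_pos hε hB) hA
    refine ⟨√(ε * B / (A + 1)), Real.sqrt_pos.2 hpos, ?_⟩
    rw [Real.sq_sqrt hpos.le, div_mul_eq_mul_div, div_le_iff₀ hA]
    gcongr
    linarith
  refine ⟨fun x => φ (c * x), φ.contDiff.comp (contDiff_const.mul contDiff_id),
    φ.hasCompactSupport.comp_homeomorph (Homeomorph.mulLeft₀ c hc.ne'),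
    fun h => hφ0 (by simpa using congrFun h 0), ?_⟩
  rw [integral_deriv_sq_comp_mul_left, Measure.integral_comp_mul_left (fun x => φ x ^ 2),
    smul_eq_mul, mul_left_comm, mul_left_comm ε]
  exact mul_le_mul_of_nonneg_left hcA (abs_nonneg _)

lemma exists_window_disjoint_bumps {ε : ℝ} (hε : 0 < ε) (n : ℕ) :
    ∃ T : ℝ, ∀ s : ℝ, ∃ f : Fin n → ℝ → ℝ, (∀ i, ContDiff ℝ (⊤ : ℕ∞) (f i)) ∧ (∀ i, f i ≠ 0) ∧
      (∀ i, tsupport (f i) ⊆ Icc s (s + T)) ∧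
      (Pairwise fun i j => Disjoint (tsupport (f i)) (tsupport (f j))) ∧
      ∀ i, ∫ x, deriv (f i) x ^ 2 ≤ ε * ∫ x, f i x ^ 2 := by
  obtain ⟨ψ, hψ, hψc, hψ0, hψε⟩ := exists_bump_integral_deriv_sq_le hε
  obtain ⟨M, hM, hψM⟩ := hψc.isCompact.isBounded.subset_ball_lt 0 0
  refine ⟨n * (2 * M), fun s => ?_⟩
  let z (i : Fin n) : ℝ := s + i * (2 * M) + M
  let cell (i : ℤ) : Set ℝ := Ioo (s + i • (2 * M)) (s + (i + 1) • (2 * M))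
  have hcell (i : Fin n) : tsupport (fun x => ψ (x - z i)) ⊆ cell i := by
    intro x hx
    have hx' := hψM ((tsupport_comp_eq_preimage ψ (Homeomorph.subRight (z i))).le hx)
    rw [Real.ball_eq_Ioo] at hx'
    simp only [Homeomorph.subRight_apply, mem_Ioo, z] at hx'
    simp only [cell, mem_Ioo, zsmul_eq_mul]
    push_cast
    constructor <;> linarith
  have hcell_subset (i : Fin n) : cell i ⊆ Icc s (s + n * (2 * M)) := by
    have hi : ((i : ℝ) + 1) ≤ n := by exact_mod_cast i.2
    refine Ioo_subset_Icc_self.trans (Icc_subset_Icc ?_ ?_) <;> simp only [zsmul_eq_mul] <;>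
      push_cast
    · exact le_add_of_nonneg_right (by positivity)
    · gcongr
  refine ⟨fun i x => ψ (x - z i), fun i => hψ.comp (contDiff_id.sub contDiff_const),
    fun i h => hψ0 (funext fun x => by simpa using congrFun h (x + z i)),
    fun i => (hcell i).trans (hcell_subset i), fun i j hij => ?_, fun i => ?_⟩
  · have hij' : (i : ℤ) ≠ j := by exact_mod_cast Fin.val_ne_of_ne hij
    exact (pairwise_disjoint_Ioo_add_zsmul s (2 * M) hij').mono (hcell i) (hcell j)
  · simp only [deriv_comp_sub_const]
    rwa [integral_sub_right_eq_self (fun x => deriv ψ x ^ 2),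
      integral_sub_right_eq_self (fun x => ψ x ^ 2)]

lemma exists_window_muRadial_le {ε : ℝ} (hε : 0 < ε) (n : ℕ) :
    ∃ T : ℝ, ∀ (a : ℝ → ℝ) (m : ℤ) (p : ℝ), ∀ s > 0,
      (∀ r ∈ Icc s (s + T), ((m : ℝ) ^ 2 - 1 / 4) * r⁻¹ ^ 2 + (a r + p) ^ 2 ≤ ε) →
      muRadial a m n p ≤ 2 * ε := by
  obtain ⟨T, hT⟩ := exists_window_disjoint_bumps hε n
  refine ⟨T, fun a m p s hs hV => ?_⟩
  obtain ⟨f, hf, hf0, hfT, hdisj, hfε⟩ := hT s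
  have htest (i) : IsTestR (f i) := .of_tsupport_subset_Icc (hf i) hs (hfT i)
  have hli : LinearIndependent ℝ f := linearIndependent_of_pairwise_disjoint_support hf0
    fun i j hij => (hdisj hij).mono (subset_tsupport _) (subset_tsupport _)
  refine (muRadial_le_rayleighSup htest hli).trans (rayleighSup_le (by positivity) fun g hg => ?_)
  have hgtest : IsTestR g := .of_mem_span (forall_mem_range.2 htest) hg
  have hsupp : Function.support g ⊆ Icc s (s + T) :=
    support_subset_of_mem_span (forall_mem_range.2 fun i => (subset_tsupport _).trans (hfT i)) hg
  calc lForm a m p g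
      ≤ (∫ r, deriv g r ^ 2) + ε * ∫ r, g r ^ 2 :=
        lForm_le hgtest hε.le fun r hr => hV r (hsupp hr)
    _ ≤ ε * (∫ r, g r ^ 2) + ε * ∫ r, g r ^ 2 := by
        gcongr
        exact integral_deriv_sq_le_of_mem_span (fun i => (hf i).of_le (by simp))
          (fun i => (htest i).hasCompactSupport) hdisj hfε hg
    _ = 2 * ε * ∫ r in Ioi 0, g r ^ 2 := by rw [hgtest.setIntegral_sq]; ring

/-! ### Slowly oscillating functions -/

/-- A function on the line is slowly oscillating at `+∞` if its oscillation over windows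
`[s, s + T]` of any fixed length tends to `0` as `s → ∞`; the oscillation is measured from the left
endpoint. -/
def SlowlyOscillating {E : Type*} [PseudoMetricSpace E] (a : ℝ → E) : Prop :=
  ∀ T : ℝ, ∀ η > 0, ∀ᶠ s in atTop, ∀ r ∈ Icc s (s + T), dist (a r) (a s) ≤ η

lemma slowlyOscillating_of_tendsto_deriv_zero {E : Type*} [NormedAddCommGroup E] [NormedSpace ℝ E]
    {a b : ℝ → E} (hder : ∀ᶠ r in atTop, HasDerivAt a (b r) r)
    (hb : Tendsto b atTop (nhds 0)) : SlowlyOscillating a := by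
  intro T η hη
  have hδ : 0 < η / (|T| + 1) := by positivity
  have hb_small : ∀ᶠ r in atTop, ‖b r‖ ≤ η / (|T| + 1) :=
    (tendsto_zero_iff_norm_tendsto_zero.1 hb).eventually_le_const hδ
  filter_upwards [eventually_forall_ge_atTop.2 (hder.and hb_small)] with s hs r hr
  have hmv := (convex_Ici s).norm_image_sub_le_of_norm_hasDerivWithin_le
    (fun x hx => (hs x hx).1.hasDerivWithinAt) (fun x hx => (hs x hx).2) self_mem_Ici hr.1
  calc dist (a r) (a s) = ‖a r - a s‖ := dist_eq_norm _ _
    _ ≤ η / (|T| + 1) * ‖r - s‖ := hmv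
    _ ≤ η / (|T| + 1) * (|T| + 1) := by
        gcongr
        rw [Real.norm_of_nonneg (sub_nonneg.2 hr.1)]
        linarith [hr.2, le_abs_self T]
    _ = η := div_mul_cancel₀ _ (by positivity)

lemma eventually_exists_eq_of_tendsto_atTop {α : Type*} [LinearOrder α] [TopologicalSpace α]
    [OrderClosedTopology α] {a : ℝ → α} (hcont : ∀ᶠ r in atTop, ContinuousAt a r)
    (ha : Tendsto a atTop atTop) {P : ℝ → Prop} (hP : ∀ᶠ s in atTop, P s) :
    ∀ᶠ k in atTop, ∃ s, P s ∧ a s = k := by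
  obtain ⟨R, hR⟩ := eventually_atTop.1 (hcont.and hP)
  filter_upwards [eventually_ge_atTop (a R)] with k hk
  obtain ⟨s, hs, hsk⟩ :=
    intermediate_value_Ici (fun r hr => (hR r hr).1.continuousWithinAt) ha hk
  exact ⟨s, (hR s hs).2, hsk⟩

lemma eventually_exists_window_potential_le {a : ℝ → ℝ}
    (hcont : ∀ᶠ r in atTop, ContinuousAt a r) (ha : Tendsto a atTop atTop)
    (hosc : SlowlyOscillating a) (c T : ℝ) {ε : ℝ} (hε : 0 < ε) :
    ∀ᶠ k in atTop, ∃ s > 0, ∀ r ∈ Icc s (s + T), c * r⁻¹ ^ 2 + (a r + -k) ^ 2 ≤ ε := by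
  have hc : Tendsto (fun r : ℝ => c * r⁻¹ ^ 2) atTop (nhds 0) := by
    simpa using (tendsto_inv_atTop_zero (𝕜 := ℝ)).pow 2 |>.const_mul c
  have hc_small := eventually_forall_ge_atTop.2 (hc.eventually_le_const (half_pos hε))
  have ha_small := hosc T √(ε / 2) (by positivity)
  filter_upwards [eventually_exists_eq_of_tendsto_atTop hcont ha
    ((eventually_gt_atTop 0).and (hc_small.and ha_small))] with k ⟨s, ⟨hs, hcs, has⟩, hsk⟩
  refine ⟨s, hs, fun r hr => ?_⟩
  have hdist : |a r + -k| ≤ √(ε / 2) := by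
    simpa only [hsk, Real.dist_eq, sub_eq_add_neg] using has r hr
  have hsq : (a r + -k) ^ 2 ≤ ε / 2 := by
    rw [← sq_abs]
    exact (Real.le_sqrt (abs_nonneg _) (half_pos hε).le).1 hdist
  linarith [hcs r hr.1]

theorem muRadial_tendsto_zero_general (a : ℝ → ℝ) (hainf : Tendsto a atTop atTop)
    (hcont : ∀ᶠ r in atTop, ContinuousAt a r) (hosc : SlowlyOscillating a) :
    ∀ n : ℕ, 1 ≤ n → ∀ m : ℤ,
      Tendsto (fun k : ℝ => muRadial a m n (-k)) atTop (nhds 0) := by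
  intro n _ m
  refine tendsto_order.2
    ⟨fun l hl => .of_forall fun k => hl.trans_le muRadial_nonneg, fun u hu => ?_⟩
  have hε : 0 < u / 4 := by positivity
  obtain ⟨T, hT⟩ := exists_window_muRadial_le hε n
  filter_upwards [eventually_exists_window_potential_le hcont hainf hosc ((m : ℝ) ^ 2 - 1 / 4) T hε]
    with k ⟨s, hs, hV⟩
  linarith [hT a m (-k) s hs hV]

/-- Proposition 3.5 of the paper: if moreover `a` is continuously differentiable for large `r`
with `b = a' → 0` as `r → ∞`, then `μ_{n,m}(-k) → 0` as `k → +∞` for all `n ≥ 1`, `m ∈ ℤ`. -/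
theorem muRadial_tendsto_zero (a b : ℝ → ℝ)
    (ha : ∀ R > (0:ℝ), IntegrableOn (fun r => (a r) ^ 2 * r) (Set.Ioc 0 R))
    (hainf : Tendsto a atTop atTop)
    (hab : ∃ r₁ > (0:ℝ), (∀ r ≥ r₁, HasDerivAt a (b r) r) ∧ ContinuousOn b (Set.Ici r₁))
    (hb0 : Tendsto b atTop (nhds 0)) :
    ∀ n : ℕ, 1 ≤ n → ∀ m : ℤ,
      Tendsto (fun k : ℝ => muRadial a m n (-k)) atTop (nhds 0) := by
  obtain ⟨r₁, -, hder, -⟩ := hab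
  have hder' : ∀ᶠ r in atTop, HasDerivAt a (b r) r := eventually_atTop.2 ⟨r₁, hder⟩
  exact muRadial_tendsto_zero_general a hainf (hder'.mono fun _ h => h.continuousAt)
    (slowlyOscillating_of_tendsto_deriv_zero hder' hb0)
end
end

section
/- Let m ≥ 1 be an integer, r₀ > 0, and let q : (0, r₀) → ℝ be continuous with ∫₀^{r₀} r |q(r)| dr < ∞. Then there exists a twice continuously differentiable solution y of the equation −r⁻¹(r y'(r))' + m² r⁻² y(r) + q(r) y(r) = 0 on (0, r₀) such that y(r) = r^m + o(r^m) as r → 0, and there exists C > 0 with |y'(r)| ≤ C r^{m−1} for all r in a neighbourhood of 0. -/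
open MeasureTheory Set Filter

noncomputable section

/-!
Writing `y = r ^ ν * u`, variation of constants with the solutions `r ^ ν` and `r ^ (-ν)` of the
free equation turns the problem into the Volterra equation
`u(r) = 1 + (2ν)⁻¹ ∫₀ʳ (1 - (s / r) ^ (2ν)) s q(s) u(s) ds`.
Its kernel is dominated by the integrable function `h(s) = (2ν)⁻¹ s |q(s)|`, so the `n`-th iterate
of the integral operator on `C([0, r₀])` has Lipschitz constant at most `(∫ h) ^ n / n!`, and a
continuous solution exists on all of `[0, r₀]`. It satisfies `u(0) = 1`, which is the asymptotics
`y ~ r ^ ν`. Moreover `r u'(r) = ∫₀ʳ (s / r) ^ (2ν) s q(s) u(s) ds` is bounded, which gives the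
bound on `y' = r ^ (ν - 1) * (ν u + r u')`.
-/

open scoped Nat Topology

theorem intervalIntegrable_of_mem_Icc {E : Type*} [NormedAddCommGroup E] {f : ℝ → E} {a b r : ℝ}
    (hf : IntervalIntegrable f volume a b) (hr : r ∈ Icc a b) : IntervalIntegrable f volume a r :=
  hf.mono_set (uIcc_subset_uIcc_left (Icc_subset_uIcc hr))

theorem hasDerivAt_intervalIntegral_of_continuousOn_Ioo {E : Type*} [NormedAddCommGroup E]
    [NormedSpace ℝ E] [CompleteSpace E] {f : ℝ → E} {a b r : ℝ}
    (hf : IntervalIntegrable f volume a b) (hfc : ContinuousOn f (Ioo a b)) (hr : r ∈ Ioo a b) :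
    HasDerivAt (fun x => ∫ s in a..x, f s) (f r) r := by
  have hfr := intervalIntegrable_of_mem_Icc hf (Ioo_subset_Icc_self hr)
  exact intervalIntegral.integral_hasDerivAt_right hfr
    (hfc.stronglyMeasurableAtFilter isOpen_Ioo r hr) (hfc.continuousAt (isOpen_Ioo.mem_nhds hr))

theorem abs_integral_mul_le_integral_abs {k f : ℝ → ℝ} {a b : ℝ} (hab : a ≤ b)
    (hk : ∀ s ∈ Ioc a b, |k s| ≤ 1) (hf : IntervalIntegrable f volume a b) :
    |∫ s in a..b, k s * f s| ≤ ∫ s in a..b, |f s| := by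
  refine intervalIntegral.norm_integral_le_of_norm_le (f := fun s => k s * f s) hab
    (.of_forall fun s hs => ?_) hf.abs
  rw [norm_mul]
  exact mul_le_of_le_one_left (abs_nonneg _) (hk s hs)

theorem integrableOn_mul_of_integrableOn_mul_abs {μ : Measure ℝ} {s : Set ℝ} {q : ℝ → ℝ}
    (hs : MeasurableSet s) (hs0 : ∀ r ∈ s, 0 ≤ r) (hq : AEStronglyMeasurable q (μ.restrict s))
    (hqi : IntegrableOn (fun r => r * |q r|) s μ) : IntegrableOn (fun r => r * q r) s μ := by
  refine hqi.mono' (aestronglyMeasurable_id.mul hq) ?_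
  filter_upwards [ae_restrict_mem hs] with r hr
  rw [norm_mul, Real.norm_of_nonneg (hs0 r hr), Real.norm_eq_abs]

section RadialFlux

variable {y w w' : ℝ → ℝ} {s : Set ℝ}

theorem contDiffOn_two_of_hasDerivAt_div_self (hs : IsOpen s) (h0 : ∀ r ∈ s, r ≠ 0)
    (hy : ∀ r ∈ s, HasDerivAt y (w r / r) r) (hw : ∀ r ∈ s, HasDerivAt w (w' r) r)
    (hw' : ContinuousOn w' s) : ContDiffOn ℝ 2 y s := by
  have hw1 : ContDiffOn ℝ 1 w s := by
    rw [← zero_add 1, contDiffOn_succ_iff_deriv_of_isOpen hs, contDiffOn_zero]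
    exact ⟨fun r hr => (hw r hr).differentiableAt.differentiableWithinAt, by simp,
      hw'.congr fun r hr => (hw r hr).deriv⟩
  rw [← one_add_one_eq_two, contDiffOn_succ_iff_deriv_of_isOpen hs]
  exact ⟨fun r hr => (hy r hr).differentiableAt.differentiableWithinAt, by simp,
    (hw1.div contDiffOn_id h0).congr fun r hr => (hy r hr).deriv⟩

theorem deriv_self_mul_deriv_of_hasDerivAt_div_self (hs : IsOpen s) (h0 : ∀ r ∈ s, r ≠ 0)
    (hy : ∀ r ∈ s, HasDerivAt y (w r / r) r) {r : ℝ} (hr : r ∈ s) :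
    deriv (fun x => x * deriv y x) r = deriv w r := by
  refine EventuallyEq.deriv_eq ?_
  filter_upwards [hs.mem_nhds hr] with x hx
  rw [(hy x hx).deriv, mul_div_cancel₀ _ (h0 x hx)]

end RadialFlux

theorem absolutelyContinuousOnInterval_pow {f : ℝ → ℝ} {a b : ℝ}
    (hf : AbsolutelyContinuousOnInterval f a b) (n : ℕ) :
    AbsolutelyContinuousOnInterval (fun x => f x ^ n) a b := by
  induction n with
  | zero => simpa using (LipschitzWith.const (1 : ℝ)).lipschitzOnWith.absolutelyContinuousOnInterval
  | succ n ih => simpa only [pow_succ] using ih.fun_mul hf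

theorem integral_mul_primitive_pow {h : ℝ → ℝ} {a b : ℝ} (hh : IntervalIntegrable h volume a b)
    (n : ℕ) :
    ∫ s in a..b, h s * (∫ t in a..s, h t) ^ n = (∫ s in a..b, h s) ^ (n + 1) / (n + 1) := by
  have hac := absolutelyContinuousOnInterval_pow
    (hh.absolutelyContinuousOnInterval_intervalIntegral left_mem_uIcc) (n + 1)
  have hderiv : ∫ s in a..b, deriv (fun x => (∫ t in a..x, h t) ^ (n + 1)) s =
      ∫ s in a..b, (n + 1) * (h s * (∫ t in a..s, h t) ^ n) := by
    refine intervalIntegral.integral_congr_ae ?_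
    filter_upwards [hh.ae_hasDerivAt_integral] with s hs hsab
    have hprim := hs (uIoc_subset_uIcc hsab) a left_mem_uIcc
    rw [(hprim.fun_pow (n + 1)).deriv]
    push_cast
    ring
  have hftc := hac.integral_deriv_eq_sub
  rw [hderiv, intervalIntegral.integral_const_mul, intervalIntegral.integral_same,
    zero_pow n.succ_ne_zero, sub_zero] at hftc
  rw [← hftc, mul_div_cancel_left₀ _ (Nat.cast_add_one_ne_zero n)]

section VolterraFixedPoint

variable {E : Type*} [MetricSpace E] {a b : ℝ} {hab : a ≤ b} {h : ℝ → ℝ}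
  {T : C(Icc a b, E) → C(Icc a b, E)}

theorem dist_iterate_apply_le_pow_div_factorial (hh : IntervalIntegrable h volume a b)
    (hnn : ∀ s ∈ Icc a b, 0 ≤ h s)
    (hT : ∀ u v (r : Icc a b), dist (T u r) (T v r) ≤
      ∫ s in a..r, h s * dist (IccExtend hab u s) (IccExtend hab v s))
    (u v : C(Icc a b, E)) (n : ℕ) (r : Icc a b) :
    dist (T^[n] u r) (T^[n] v r) ≤ (∫ s in a..r, h s) ^ n / n ! * dist u v := by
  induction n generalizing r with
  | zero => simpa using ContinuousMap.dist_apply_le_dist r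
  | succ n ih =>
    have hhr : IntervalIntegrable h volume a r := intervalIntegrable_of_mem_Icc hh r.2
    have hprim : ContinuousOn (fun s => ∫ t in a..s, h t) (uIcc a r) :=
      intervalIntegral.continuousOn_primitive_interval' hhr left_mem_uIcc
    simp only [Function.iterate_succ_apply']
    calc dist (T (T^[n] u) r) (T (T^[n] v) r)
        ≤ ∫ s in a..r, h s * dist (IccExtend hab (T^[n] u) s) (IccExtend hab (T^[n] v) s) :=
          hT _ _ r
      _ ≤ ∫ s in a..r, h s * (∫ t in a..s, h t) ^ n * (dist u v / n !) := by
        refine intervalIntegral.integral_mono_on r.2.1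
          (hhr.mul_continuousOn (by fun_prop))
          ((hhr.mul_continuousOn (hprim.pow n)).mul_const _) fun s hs => ?_
        have hs' : s ∈ Icc a b := ⟨hs.1, hs.2.trans r.2.2⟩
        rw [IccExtend_of_mem _ _ hs', IccExtend_of_mem _ _ hs', mul_assoc]
        refine mul_le_mul_of_nonneg_left ((ih ⟨s, hs'⟩).trans_eq ?_) (hnn s hs')
        ring
      _ = (∫ s in a..r, h s) ^ (n + 1) / (n + 1)! * dist u v := by
        rw [intervalIntegral.integral_mul_const, integral_mul_primitive_pow hhr,
          Nat.factorial_succ]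
        push_cast
        field_simp

theorem exists_isFixedPt_of_dist_apply_le_integral [CompleteSpace E] [Nonempty E]
    (hh : IntervalIntegrable h volume a b) (hnn : ∀ s ∈ Icc a b, 0 ≤ h s)
    (hT : ∀ u v (r : Icc a b), dist (T u r) (T v r) ≤
      ∫ s in a..r, h s * dist (IccExtend hab u s) (IccExtend hab v s)) :
    ∃ u, Function.IsFixedPt T u := by
  set M : ℝ := ∫ s in a..b, h s
  have hM : 0 ≤ M := intervalIntegral.integral_nonneg hab hnn
  obtain ⟨n, hn⟩ := FloorSemiring.tendsto_pow_div_factorial_atTop M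
    |>.eventually (gt_mem_nhds zero_lt_one) |>.exists
  have hprim_le (r : Icc a b) : ∫ s in a..r, h s ≤ M :=
    intervalIntegral.integral_mono_interval le_rfl r.2.1 r.2.2
      ((ae_restrict_iff' measurableSet_Ioc).2 (.of_forall fun s hs => hnn s ⟨hs.1.le, hs.2⟩)) hh
  have hprim_nonneg (r : Icc a b) : 0 ≤ ∫ s in a..r, h s :=
    intervalIntegral.integral_nonneg r.2.1 fun s hs => hnn s ⟨hs.1, hs.2.trans r.2.2⟩
  have hconst : 0 ≤ M ^ n / n ! := by positivity
  have hcontr : ContractingWith (M ^ n / n !).toNNReal T^[n] := by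
    refine ⟨Real.toNNReal_lt_one.2 hn, LipschitzWith.of_dist_le_mul fun u v => ?_⟩
    rw [Real.coe_toNNReal _ hconst]
    refine (ContinuousMap.dist_le (by positivity)).2 fun r =>
      (dist_iterate_apply_le_pow_div_factorial hh hnn hT u v n r).trans ?_
    have := pow_le_pow_left₀ (hprim_nonneg r) (hprim_le r) n
    gcongr
  have : Nonempty C(Icc a b, E) := ‹Nonempty E›.map (ContinuousMap.const _)
  exact ⟨_, hcontr.isFixedPt_fixedPoint_iterate⟩

end VolterraFixedPoint

/-- The integral `∫₀ʳ (s / r) ^ p f(s) ds`, equal to `r ^ (-p) ∫₀ʳ s ^ p f(s) ds` for `r > 0`. It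
carries the singular solution in the variation of constants formula. The value at `r = 0` is `0`,
which is also the limit for `f` integrable and `p ≥ 0`. -/
def powWeightedIntegral (p : ℝ) (f : ℝ → ℝ) (r : ℝ) : ℝ :=
  ∫ s in (0 : ℝ)..r, (s / r) ^ p * f s

section PowWeightedIntegral

variable {p b r : ℝ} {f : ℝ → ℝ}

theorem div_rpow_mem_Icc (hp : 0 ≤ p) {s : ℝ} (hs : s ∈ Ioc 0 r) : (s / r) ^ p ∈ Icc (0 : ℝ) 1 := by
  have hr : 0 < r := hs.1.trans_le hs.2
  have hdiv : 0 ≤ s / r := div_nonneg hs.1.le hr.le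
  exact ⟨Real.rpow_nonneg hdiv p, Real.rpow_le_one hdiv ((div_le_one hr).2 hs.2) hp⟩

theorem intervalIntegrable_div_rpow_mul (hp : 0 ≤ p) (hf : IntervalIntegrable f volume 0 r) :
    IntervalIntegrable (fun s => (s / r) ^ p * f s) volume 0 r :=
  hf.continuousOn_mul
    ((Real.continuous_rpow_const hp).comp (continuous_id.div_const r)).continuousOn

theorem powWeightedIntegral_eq_rpow_neg_mul (p : ℝ) (f : ℝ → ℝ) (hr : 0 ≤ r) :
    powWeightedIntegral p f r = r ^ (-p) * ∫ s in (0 : ℝ)..r, s ^ p * f s := by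
  rw [powWeightedIntegral, ← intervalIntegral.integral_const_mul]
  refine intervalIntegral.integral_congr fun s hs => ?_
  rw [uIcc_of_le hr] at hs
  simp only [Real.div_rpow hs.1 hr, Real.rpow_neg hr]
  ring

theorem abs_powWeightedIntegral_le (hp : 0 ≤ p) (hr : 0 ≤ r)
    (hf : IntervalIntegrable f volume 0 r) :
    |powWeightedIntegral p f r| ≤ ∫ s in (0 : ℝ)..r, |f s| := by
  refine abs_integral_mul_le_integral_abs hr (fun s hs => ?_) hf
  obtain ⟨h0, h1⟩ := div_rpow_mem_Icc hp hs
  rwa [abs_of_nonneg h0]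

theorem continuousOn_powWeightedIntegral (hp : 0 ≤ p) (hf : IntervalIntegrable f volume 0 b) :
    ContinuousOn (powWeightedIntegral p f) (Icc 0 b) := by
  rcases lt_or_ge b 0 with hb | hb
  · simp [Icc_eq_empty hb.not_ge]
  have hprim {g : ℝ → ℝ} (hg : IntervalIntegrable g volume 0 b) :
      ContinuousOn (fun x => ∫ s in (0 : ℝ)..x, g s) (Icc 0 b) := by
    simpa only [uIcc_of_le hb] using
      intervalIntegral.continuousOn_primitive_interval' hg left_mem_uIcc
  intro r hr
  rcases hr.1.eq_or_lt with rfl | hr0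
  · have hlim := hprim hf.abs 0 hr
    simp only [ContinuousWithinAt, intervalIntegral.integral_same] at hlim
    simp only [ContinuousWithinAt, powWeightedIntegral, intervalIntegral.integral_same]
    refine squeeze_zero_norm' ?_ hlim
    filter_upwards [self_mem_nhdsWithin] with r hr
    exact abs_powWeightedIntegral_le hp hr.1 (intervalIntegrable_of_mem_Icc hf hr)
  · have hmul := hprim (hf.continuousOn_mul (Real.continuous_rpow_const hp).continuousOn) r hr
    refine ((Real.continuousAt_rpow_const r (-p) (.inl hr0.ne')).continuousWithinAt.mul
      hmul).congr (fun x hx => ?_) ?_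
    · exact powWeightedIntegral_eq_rpow_neg_mul p f hx.1
    · exact powWeightedIntegral_eq_rpow_neg_mul p f hr.1

theorem hasDerivAt_powWeightedIntegral (hp : 0 ≤ p) (hf : IntervalIntegrable f volume 0 b)
    (hfc : ContinuousOn f (Ioo 0 b)) (hr : r ∈ Ioo 0 b) :
    HasDerivAt (powWeightedIntegral p f) (f r - p / r * powWeightedIntegral p f r) r := by
  have hpow : Continuous fun s : ℝ => s ^ p := Real.continuous_rpow_const hp
  have hprim := hasDerivAt_intervalIntegral_of_continuousOn_Ioo
    (hf.continuousOn_mul hpow.continuousOn) (hpow.continuousOn.mul hfc) hr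
  have hprod := (Real.hasDerivAt_rpow_const (p := -p) (.inl hr.1.ne')).mul hprim
  have heq : powWeightedIntegral p f =ᶠ[𝓝 r]
      fun x => x ^ (-p) * ∫ s in (0 : ℝ)..x, s ^ p * f s := by
    filter_upwards [Ioi_mem_nhds hr.1] with x hx
    exact powWeightedIntegral_eq_rpow_neg_mul p f (mem_Ioi.1 hx).le
  refine (hprod.congr_of_eventuallyEq heq).congr_deriv ?_
  have hcancel : r ^ (-p) * r ^ p = 1 := by rw [← Real.rpow_add hr.1]; simp
  rw [powWeightedIntegral_eq_rpow_neg_mul p f hr.1.le, Real.rpow_sub_one hr.1.ne']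
  linear_combination f r * hcancel

end PowWeightedIntegral

/-- The variation of constants integral `(2ν)⁻¹ ∫₀ʳ (1 - (s / r) ^ (2ν)) f(s) ds`. Its kernel is
that of the Bessel-type operator built from `r ^ ν` and `r ^ (-ν)`, after `r ^ ν` is factored out of
the solution. -/
def besselDuhamel (ν : ℝ) (f : ℝ → ℝ) (r : ℝ) : ℝ :=
  (2 * ν)⁻¹ * ∫ s in (0 : ℝ)..r, (1 - (s / r) ^ (2 * ν)) * f s

section BesselDuhamel

variable {ν b r : ℝ} {f g : ℝ → ℝ}

theorem besselDuhamel_zero_right (ν : ℝ) (f : ℝ → ℝ) : besselDuhamel ν f 0 = 0 := by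
  simp [besselDuhamel]

theorem besselDuhamel_eq_integral_sub (hν : 0 ≤ ν) (hf : IntervalIntegrable f volume 0 r) :
    besselDuhamel ν f r =
      (2 * ν)⁻¹ * ((∫ s in (0 : ℝ)..r, f s) - powWeightedIntegral (2 * ν) f r) := by
  rw [besselDuhamel, powWeightedIntegral, ← intervalIntegral.integral_sub hf
    (intervalIntegrable_div_rpow_mul (by positivity) hf)]
  simp only [sub_mul, one_mul]

theorem besselDuhamel_sub (hν : 0 ≤ ν) (hf : IntervalIntegrable f volume 0 r)
    (hg : IntervalIntegrable g volume 0 r) :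
    besselDuhamel ν f r - besselDuhamel ν g r = besselDuhamel ν (fun s => f s - g s) r := by
  have hkernel {h : ℝ → ℝ} (hh : IntervalIntegrable h volume 0 r) :
      IntervalIntegrable (fun s => (1 - (s / r) ^ (2 * ν)) * h s) volume 0 r := by
    simpa only [sub_mul, one_mul] using
      hh.sub (intervalIntegrable_div_rpow_mul (by positivity) hh)
  simp only [besselDuhamel, ← mul_sub, ← intervalIntegral.integral_sub (hkernel hf) (hkernel hg)]

theorem abs_besselDuhamel_le (hν : 0 ≤ ν) (hr : 0 ≤ r) (hf : IntervalIntegrable f volume 0 r) :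
    |besselDuhamel ν f r| ≤ (2 * ν)⁻¹ * ∫ s in (0 : ℝ)..r, |f s| := by
  rw [besselDuhamel, abs_mul, abs_of_nonneg (by positivity : 0 ≤ (2 * ν)⁻¹)]
  gcongr
  refine abs_integral_mul_le_integral_abs hr (fun s hs => ?_) hf
  obtain ⟨h0, h1⟩ := div_rpow_mem_Icc (p := 2 * ν) (by positivity) hs
  rw [abs_of_nonneg (sub_nonneg.2 h1)]
  exact sub_le_self _ h0

theorem continuousOn_besselDuhamel (hν : 0 ≤ ν) (hf : IntervalIntegrable f volume 0 b) :
    ContinuousOn (besselDuhamel ν f) (Icc 0 b) := by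
  have hprim : ContinuousOn (fun x => ∫ s in (0 : ℝ)..x, f s) (Icc 0 b) :=
    (intervalIntegral.continuousOn_primitive_interval' hf left_mem_uIcc).mono Icc_subset_uIcc
  refine ((continuousOn_const (c := (2 * ν)⁻¹)).mul (hprim.sub
    (continuousOn_powWeightedIntegral (p := 2 * ν) (by positivity) hf))).congr fun r hr => ?_
  exact besselDuhamel_eq_integral_sub hν (intervalIntegrable_of_mem_Icc hf hr)

theorem hasDerivAt_besselDuhamel (hν : 0 < ν) (hf : IntervalIntegrable f volume 0 b)
    (hfc : ContinuousOn f (Ioo 0 b)) (hr : r ∈ Ioo 0 b) :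
    HasDerivAt (besselDuhamel ν f) (powWeightedIntegral (2 * ν) f r / r) r := by
  have hdiff := ((hasDerivAt_intervalIntegral_of_continuousOn_Ioo hf hfc hr).sub
    (hasDerivAt_powWeightedIntegral (p := 2 * ν) (by positivity) hf hfc hr)).const_mul (2 * ν)⁻¹
  have heq : besselDuhamel ν f =ᶠ[𝓝 r] fun x =>
      (2 * ν)⁻¹ * ((∫ s in (0 : ℝ)..x, f s) - powWeightedIntegral (2 * ν) f x) := by
    filter_upwards [Icc_mem_nhds hr.1 hr.2] with x hx
    exact besselDuhamel_eq_integral_sub hν.le (intervalIntegrable_of_mem_Icc hf hx)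
  refine (hdiff.congr_of_eventuallyEq heq).congr_deriv ?_
  have hr0 : r ≠ 0 := hr.1.ne'
  field_simp
  ring

theorem exists_continuous_eq_add_besselDuhamel {w : ℝ → ℝ} (hν : 0 ≤ ν) (hb : 0 ≤ b)
    (hg : ContinuousOn g (Icc 0 b)) (hw : IntervalIntegrable w volume 0 b) :
    ∃ u : ℝ → ℝ, Continuous u ∧
      ∀ r ∈ Icc 0 b, u r = g r + besselDuhamel ν (fun s => w s * u s) r := by
  have hwu (u : C(Icc 0 b, ℝ)) :
      IntervalIntegrable (fun s => w s * IccExtend hb u s) volume 0 b :=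
    hw.mul_continuousOn u.continuous.Icc_extend'.continuousOn
  let T : C(Icc 0 b, ℝ) → C(Icc 0 b, ℝ) := fun u =>
    ⟨_, (hg.add (continuousOn_besselDuhamel hν (hwu u))).domRestrict⟩
  have hT (u v : C(Icc 0 b, ℝ)) (r : Icc 0 b) : dist (T u r) (T v r) ≤
      ∫ s in 0..r, (2 * ν)⁻¹ * |w s| * dist (IccExtend hb u s) (IccExtend hb v s) := by
    have hu := intervalIntegrable_of_mem_Icc (hwu u) r.2
    have hv := intervalIntegrable_of_mem_Icc (hwu v) r.2
    calc dist (T u r) (T v r)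
        = |besselDuhamel ν (fun s => w s * IccExtend hb u s - w s * IccExtend hb v s) r| := by
          rw [← besselDuhamel_sub hν hu hv, ← Real.dist_eq]
          exact dist_add_left _ _ _
      _ ≤ (2 * ν)⁻¹ * ∫ s in 0..r, |w s * IccExtend hb u s - w s * IccExtend hb v s| :=
          abs_besselDuhamel_le hν r.2.1 (hu.sub hv)
      _ = _ := by
          simp only [← intervalIntegral.integral_const_mul, ← mul_sub, abs_mul, Real.dist_eq,
            mul_assoc]
  obtain ⟨u, hu⟩ := exists_isFixedPt_of_dist_apply_le_integral (hw.abs.const_mul (2 * ν)⁻¹)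
    (fun s _ => by positivity) hT
  refine ⟨IccExtend hb u, u.continuous.Icc_extend', fun r hr => ?_⟩
  rw [IccExtend_of_mem hb u hr]
  exact (DFunLike.congr_fun hu ⟨r, hr⟩).symm

end BesselDuhamel

/-- The function `r ^ ν * (1 + besselDuhamel ν f r)`, the solution asymptotic to `r ^ ν` at `0` of
the inhomogeneous equation `(r y')' = ν² y / r + r ^ ν f`. -/
def besselRegular (ν : ℝ) (f : ℝ → ℝ) (r : ℝ) : ℝ :=
  r ^ ν * (1 + besselDuhamel ν f r)

/-- The flux `r y'` of `y = besselRegular ν f`. -/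
def besselRegularFlux (ν : ℝ) (f : ℝ → ℝ) (r : ℝ) : ℝ :=
  r ^ ν * (ν * (1 + besselDuhamel ν f r) + powWeightedIntegral (2 * ν) f r)

section BesselRegular

variable {ν b r : ℝ} {f : ℝ → ℝ}

theorem hasDerivAt_besselRegular (hν : 0 < ν) (hf : IntervalIntegrable f volume 0 b)
    (hfc : ContinuousOn f (Ioo 0 b)) (hr : r ∈ Ioo 0 b) :
    HasDerivAt (besselRegular ν f) (besselRegularFlux ν f r / r) r := by
  refine ((Real.hasDerivAt_rpow_const (.inl hr.1.ne')).mul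
    ((hasDerivAt_besselDuhamel hν hf hfc hr).const_add 1)).congr_deriv ?_
  rw [besselRegularFlux, Real.rpow_sub_one hr.1.ne']
  ring

theorem hasDerivAt_besselRegularFlux (hν : 0 < ν) (hf : IntervalIntegrable f volume 0 b)
    (hfc : ContinuousOn f (Ioo 0 b)) (hr : r ∈ Ioo 0 b) :
    HasDerivAt (besselRegularFlux ν f) (ν ^ 2 * besselRegular ν f r / r + r ^ ν * f r) r := by
  refine ((Real.hasDerivAt_rpow_const (.inl hr.1.ne')).mul
    ((((hasDerivAt_besselDuhamel hν hf hfc hr).const_add 1).const_mul ν).add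
      (hasDerivAt_powWeightedIntegral (by positivity) hf hfc hr))).congr_deriv ?_
  rw [Pi.add_apply, besselRegular, Real.rpow_sub_one hr.1.ne']
  ring

theorem tendsto_besselRegular_div_rpow (hν : 0 ≤ ν) (hb : 0 < b)
    (hf : IntervalIntegrable f volume 0 b) :
    Tendsto (fun r => besselRegular ν f r / r ^ ν) (𝓝[>] 0) (𝓝 1) := by
  have hcont : Tendsto (besselDuhamel ν f) (𝓝[>] 0) (𝓝 0) := by
    have := continuousOn_besselDuhamel hν hf 0 (left_mem_Icc.2 hb.le)
    rw [ContinuousWithinAt, besselDuhamel_zero_right] at this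
    exact this.mono_left (nhdsWithin_le_of_mem (Icc_mem_nhdsGT hb))
  have hlim : Tendsto (fun r => 1 + besselDuhamel ν f r) (𝓝[>] 0) (𝓝 1) := by
    simpa only [add_zero] using hcont.const_add 1
  refine hlim.congr' ?_
  filter_upwards [self_mem_nhdsWithin] with r hr
  rw [besselRegular, mul_div_cancel_left₀ _ (Real.rpow_pos_of_pos hr ν).ne']

theorem exists_abs_besselRegularFlux_le (hν : 0 ≤ ν) (hf : IntervalIntegrable f volume 0 b) :
    ∃ C > 0, ∀ r ∈ Icc 0 b, |besselRegularFlux ν f r| ≤ C * r ^ ν := by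
  have hcont : ContinuousOn
      (fun r => ν * (1 + besselDuhamel ν f r) + powWeightedIntegral (2 * ν) f r) (Icc 0 b) :=
    (continuousOn_const.mul (continuousOn_const.add (continuousOn_besselDuhamel hν hf))).add
      (continuousOn_powWeightedIntegral (by positivity) hf)
  obtain ⟨C, hC⟩ := isCompact_Icc.exists_bound_of_continuousOn hcont
  refine ⟨max C 1, by positivity, fun r hr => ?_⟩
  have hpow : 0 ≤ r ^ ν := Real.rpow_nonneg hr.1 ν
  rw [besselRegularFlux, abs_mul, abs_of_nonneg hpow, mul_comm]
  exact mul_le_mul_of_nonneg_right ((hC r hr).trans (le_max_left _ _)) hpow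

theorem exists_rpow_mul_eq_mul_besselRegular {w : ℝ → ℝ} (hν : 0 ≤ ν) (hb : 0 ≤ b)
    (hw : IntervalIntegrable w volume 0 b) (hwc : ContinuousOn w (Ioo 0 b)) :
    ∃ f : ℝ → ℝ, IntervalIntegrable f volume 0 b ∧ ContinuousOn f (Ioo 0 b) ∧
      ∀ r ∈ Icc 0 b, r ^ ν * f r = w r * besselRegular ν f r := by
  obtain ⟨u, huc, hu⟩ := exists_continuous_eq_add_besselDuhamel hν hb
    (continuousOn_const (c := (1 : ℝ))) hw
  refine ⟨fun s => w s * u s, hw.mul_continuousOn huc.continuousOn, hwc.mul huc.continuousOn,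
    fun r hr => ?_⟩
  rw [besselRegular, ← hu r hr]
  ring

end BesselRegular

theorem bessel_regular_solution_general {ν r₀ : ℝ} (hν : 0 < ν) (hr₀ : 0 < r₀) {q : ℝ → ℝ}
    (hq : ContinuousOn q (Ioo 0 r₀)) (hqi : IntegrableOn (fun r => r * |q r|) (Ioo 0 r₀)) :
    ∃ y : ℝ → ℝ, ContDiffOn ℝ 2 y (Ioo 0 r₀) ∧
      (∀ r ∈ Ioo 0 r₀,
        -r⁻¹ * deriv (fun s => s * deriv y s) r + ν ^ 2 * r⁻¹ ^ 2 * y r + q r * y r = 0) ∧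
      Tendsto (fun r => y r / r ^ ν) (𝓝[>] 0) (𝓝 1) ∧
      ∃ C > 0, ∀ r ∈ Ioo 0 r₀, |deriv y r| ≤ C * r ^ (ν - 1) := by
  have hne : ∀ r ∈ Ioo 0 r₀, r ≠ 0 := fun r hr => hr.1.ne'
  have hw : IntervalIntegrable (fun r => r * q r) volume 0 r₀ :=
    (intervalIntegrable_iff_integrableOn_Ioo_of_le hr₀.le).2 <|
      integrableOn_mul_of_integrableOn_mul_abs measurableSet_Ioo (fun r hr => hr.1.le)
        (hq.aestronglyMeasurable measurableSet_Ioo) hqi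
  obtain ⟨f, hf, hfc, hfy⟩ :=
    exists_rpow_mul_eq_mul_besselRegular hν.le hr₀.le hw (continuousOn_id.mul hq)
  have hy := fun r hr => hasDerivAt_besselRegular (r := r) hν hf hfc hr
  have hflux := fun r hr => hasDerivAt_besselRegularFlux (r := r) hν hf hfc hr
  obtain ⟨C, hC, hbound⟩ := exists_abs_besselRegularFlux_le hν.le hf
  refine ⟨besselRegular ν f, contDiffOn_two_of_hasDerivAt_div_self isOpen_Ioo hne hy hflux ?_,
    fun r hr => ?_, tendsto_besselRegular_div_rpow hν.le hr₀ hf, C, hC, fun r hr => ?_⟩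
  · have hyc : ContinuousOn (besselRegular ν f) (Ioo 0 r₀) := HasDerivAt.continuousOn hy
    have hpow : ContinuousOn (fun r : ℝ => r ^ ν) (Ioo 0 r₀) :=
      (Real.continuous_rpow_const hν.le).continuousOn
    exact ((continuousOn_const.mul hyc).div continuousOn_id hne).add (hpow.mul hfc)
  · rw [deriv_self_mul_deriv_of_hasDerivAt_div_self isOpen_Ioo hne hy hr, (hflux r hr).deriv,
      hfy r (Ioo_subset_Icc_self hr)]
    have := hne r hr
    field_simp
    ring
  · rw [(hy r hr).deriv, abs_div, abs_of_pos hr.1, Real.rpow_sub_one (hne r hr), ← mul_div_assoc]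
    exact div_le_div_of_nonneg_right (hbound r (Ioo_subset_Icc_self hr)) hr.1.le

/-- Lemma 4.1 (case `m ≠ 0`) of the paper: if `q` is continuous on `(0, r₀)` and
`∫₀^{r₀} r |q(r)| dr < ∞`, then the Bessel-type equation
`-r⁻¹ (r y')' + m² r⁻² y + q y = 0` has a regular solution `y` with
`y(r) = r^m + o(r^m)` as `r → 0` and `|y'(r)| ≤ C r^{m-1}` near `0`. -/
theorem bessel_regular_solution (m : ℕ) (hm : 1 ≤ m) (r₀ : ℝ) (hr₀ : 0 < r₀)
    (q : ℝ → ℝ) (hq : ContinuousOn q (Set.Ioo 0 r₀))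
    (hqi : IntegrableOn (fun r => r * |q r|) (Set.Ioo 0 r₀)) :
    ∃ y : ℝ → ℝ, ContDiffOn ℝ 2 y (Set.Ioo 0 r₀) ∧
      (∀ r ∈ Set.Ioo (0:ℝ) r₀,
        -r⁻¹ * deriv (fun s => s * deriv y s) r + (m : ℝ) ^ 2 * r⁻¹ ^ 2 * y r
          + q r * y r = 0) ∧
      Tendsto (fun r => y r / r ^ m) (nhdsWithin 0 (Set.Ioi 0)) (nhds 1) ∧
      ∃ C > (0:ℝ), ∃ δ ∈ Set.Ioc (0:ℝ) r₀, ∀ r ∈ Set.Ioo (0:ℝ) δ,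
        |deriv y r| ≤ C * r ^ (m - 1) := by
  obtain ⟨y, hy, hode, hlim, C, hC, hbound⟩ :=
    bessel_regular_solution_general (ν := m) (by exact_mod_cast hm) hr₀ hq hqi
  refine ⟨y, hy, hode, by simpa only [Real.rpow_natCast] using hlim, C, hC, r₀, ⟨hr₀, le_rfl⟩, ?_⟩
  simpa only [← Real.rpow_natCast, Nat.cast_pred hm] using hbound
end
end

section
/- Let r₀ ∈ (0,1), and let q : (0, r₀) → ℝ be continuous with ∫₀^{r₀} r (ln r)² |q(r)| dr < ∞. Then the equation −r⁻¹(r y'(r))' + q(r) y(r) = 0 on (0, r₀) has a twice continuously differentiable solution y_sing with y_sing(r) = ln r + o(1) as r → 0, and a solution y_reg with y_reg(r) → 1 as r → 0; moreover, every bounded solution of this equation on (0, r₀) is a constant multiple of y_reg. -/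
open MeasureTheory Set Filter

noncomputable section

/-!
Write a solution as `y = v₁ + v₂ ln r` with `r y' = v₂` (variation of constants). The equation then
becomes a linear system `v' = A v` with `‖A(r)‖ = O(r (ln r)² |q(r)|)`, which is integrable at `0`.
Hence the Picard series converges up to the singular endpoint, and there is a solution with any
prescribed limit `v(0)`; `y_sing` and `y_reg` are those with `v(0) = (0, 1)` and `v(0) = (1, 0)`.
Since `|ln r|` decreases, `ln r (v₂(r) - v₂(0))` is bounded by `∫₀^r |ln t| |v₂'(t)| dt → 0`, which
gives the asymptotics up to `o(1)`. As `A` is trace free, the Wronskian is constant, so the two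
solutions span all of them, and a solution that is `o(ln r)` has no `y_sing` component.
-/

open Asymptotics intervalIntegral
open scoped Topology

section Primitive

variable {F : Type*} [NormedAddCommGroup F] {f : ℝ → F} {a b r : ℝ}

lemma eventually_intervalIntegrable_of_integrableAtFilter (hf : IntegrableAtFilter f (𝓝[>] a)) :
    ∀ᶠ c in 𝓝[>] a, IntervalIntegrable f volume a c := by
  obtain ⟨s, hs, hfs⟩ := hf
  obtain ⟨c, hac, hcs⟩ := mem_nhdsGT_iff_exists_Ioo_subset.1 hs
  filter_upwards [Ioo_mem_nhdsGT hac] with d hd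
  rw [intervalIntegrable_iff_integrableOn_Ioo_of_le hd.1.le]
  exact hfs.mono_set ((Ioo_subset_Ioo_right hd.2.le).trans hcs)

lemma intervalIntegrable_of_integrableAtFilter_of_continuousOn
    (hf : IntegrableAtFilter f (𝓝[>] a)) (hfc : ContinuousOn f (Ioo a b)) (hr : r ∈ Ioo a b) :
    IntervalIntegrable f volume a r := by
  obtain ⟨c, hfac, hc⟩ := ((eventually_intervalIntegrable_of_integrableAtFilter hf).and
    (Ioo_mem_nhdsGT (hr.1.trans hr.2))).exists
  exact hfac.trans (hfc.mono (ordConnected_Ioo.uIcc_subset hc hr)).intervalIntegrable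

variable [NormedSpace ℝ F]

lemma tendsto_integral_nhdsGT_zero (hf : IntegrableAtFilter f (𝓝[>] a)) :
    Tendsto (fun r => ∫ t in a..r, f t) (𝓝[>] a) (𝓝 0) := by
  obtain ⟨c, hfac, hac⟩ := ((eventually_intervalIntegrable_of_integrableAtFilter hf).and
    self_mem_nhdsWithin).exists
  have hcont := continuousOn_primitive_interval' hfac left_mem_uIcc a left_mem_uIcc
  rw [ContinuousWithinAt, integral_same, uIcc_of_le (mem_Ioi.1 hac).le] at hcont
  rw [← nhdsWithin_Ioo_eq_nhdsGT hac]
  exact hcont.mono_left (nhdsWithin_mono a Ioo_subset_Icc_self)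

variable [CompleteSpace F]

lemma hasDerivAt_integral_of_continuousOn_Ioo (hf : IntervalIntegrable f volume a b)
    (hfc : ContinuousOn f (Ioo a b)) (hr : r ∈ Ioo a b) :
    HasDerivAt (fun x => ∫ t in a..x, f t) (f r) r := by
  have hfr : IntervalIntegrable f volume a r :=
    hf.mono_set (uIcc_subset_uIcc_left (Ioo_subset_Icc_self.trans Icc_subset_uIcc hr))
  exact integral_hasDerivAt_right hfr (hfc.stronglyMeasurableAtFilter isOpen_Ioo r hr)
    (hfc.continuousAt (isOpen_Ioo.mem_nhds hr))

lemma tendsto_smul_sub_of_integrableAtFilter_smul_deriv {w : ℝ → ℝ} {f' : ℝ → F} {l : F}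
    (hab : a < b) (hw : AntitoneOn (fun t => ‖w t‖) (Ioo a b))
    (hderiv : ∀ t ∈ Ioo a b, HasDerivAt f (f' t) t) (hlim : Tendsto f (𝓝[>] a) (𝓝 l))
    (hint : IntegrableAtFilter (fun t => w t • f' t) (𝓝[>] a)) :
    Tendsto (fun r => w r • (f r - l)) (𝓝[>] a) (𝓝 0) := by
  refine squeeze_zero_norm' ?_ (tendsto_integral_nhdsGT_zero hint.norm)
  filter_upwards [eventually_intervalIntegrable_of_integrableAtFilter hint, Ioo_mem_nhdsGT hab]
    with r hintr hr
  have hsub : ∀ t ∈ Ioo a r, t ∈ Ioo a b := fun t ht => ⟨ht.1, ht.2.trans hr.2⟩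
  have hle : ∀ t ∈ Ioo a r, ‖w r • f' t‖ ≤ ‖w t • f' t‖ := fun t ht => by
    rw [norm_smul, norm_smul]
    exact mul_le_mul_of_nonneg_right (hw (hsub t ht) hr ht.2.le) (norm_nonneg _)
  have hmeas : AEStronglyMeasurable f' (volume.restrict (Ioo a r)) :=
    (aestronglyMeasurable_deriv f _).congr <| (ae_restrict_iff' measurableSet_Ioo).2 <|
      .of_forall fun t ht => (hderiv t (hsub t ht)).deriv
  rw [intervalIntegrable_iff_integrableOn_Ioo_of_le hr.1.le] at hintr
  have hint_r : IntegrableOn (fun t => w r • f' t) (Ioo a r) :=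
    hintr.norm.mono' (hmeas.const_smul (w r)) (ae_restrict_of_forall_mem measurableSet_Ioo hle)
  have hftc : ∫ t in a..r, w r • f' t = w r • f r - w r • l :=
    integral_eq_sub_of_hasDerivAt_of_tendsto hr.1
      (fun t ht => (hderiv t (hsub t ht)).const_smul (w r))
      ((intervalIntegrable_iff_integrableOn_Ioo_of_le hr.1.le).2 hint_r) (hlim.const_smul (w r))
      ((hderiv r hr).continuousAt.tendsto.const_smul (w r) |>.mono_left nhdsWithin_le_nhds)
  rw [smul_sub, ← hftc, integral_of_le hr.1.le, integral_of_le hr.1.le,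
    integral_Ioc_eq_integral_Ioo, integral_Ioc_eq_integral_Ioo]
  exact norm_integral_le_of_norm_le hintr.norm (ae_restrict_of_forall_mem measurableSet_Ioo hle)

end Primitive

lemma integral_mul_integral_pow {g : ℝ → ℝ} {a b : ℝ} (hab : a ≤ b)
    (hg : IntervalIntegrable g volume a b) (hgc : ContinuousOn g (Ioo a b)) (n : ℕ) :
    ∫ t in a..b, g t * (∫ s in a..t, g s) ^ n = (∫ t in a..b, g t) ^ (n + 1) / (n + 1) := by
  have hcont : ContinuousOn (fun x => ∫ s in a..x, g s) (uIcc a b) :=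
    continuousOn_primitive_interval' hg left_mem_uIcc
  have hderiv : ∀ r ∈ Ioo a b, HasDerivAt (fun x => (∫ s in a..x, g s) ^ (n + 1) / (n + 1))
      (g r * (∫ s in a..r, g s) ^ n) r := fun r hr => by
    refine (((hasDerivAt_integral_of_continuousOn_Ioo hg hgc hr).pow (n + 1)).div_const
      ((n : ℝ) + 1)).congr_deriv ?_
    rw [Nat.cast_succ, Nat.add_sub_cancel]
    field_simp
  rw [integral_eq_sub_of_hasDerivAt_of_le hab _ hderiv (hg.mul_continuousOn (hcont.pow n))]
  · simp
  · rw [uIcc_of_le hab] at hcont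
    fun_prop

section Picard

variable {E : Type*} [NormedAddCommGroup E] [NormedSpace ℝ E]

lemma intervalIntegrable_clm_apply_of_continuousOn {F : Type*} [NormedAddCommGroup F]
    [NormedSpace ℝ F] {A : ℝ → E →L[ℝ] F} {v : ℝ → E} {a b : ℝ}
    (hA : IntervalIntegrable A volume a b) (hv : ContinuousOn v (uIcc a b)) :
    IntervalIntegrable (fun t => A t (v t)) volume a b := by
  obtain ⟨C, hC⟩ := isCompact_uIcc.exists_bound_of_continuousOn hv
  rw [intervalIntegrable_iff] at hA ⊢
  have hvm : AEStronglyMeasurable v (volume.restrict (uIoc a b)) :=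
    (hv.mono uIoc_subset_uIcc).aestronglyMeasurable measurableSet_uIoc
  refine (hA.norm.mul_const C).mono'
    ((ContinuousLinearMap.id ℝ (E →L[ℝ] F)).aestronglyMeasurable_comp₂ hA.1 hvm) ?_
  filter_upwards [ae_restrict_mem measurableSet_uIoc] with t ht
  exact (A t).le_of_opNorm_le_of_le le_rfl (hC t (uIoc_subset_uIcc ht))

/-- The `n`-th term of the Picard (Dyson) series of the initial value problem `v' = A v`,
`v a = v₀`. -/
def picardTerm (A : ℝ → E →L[ℝ] E) (a : ℝ) (v₀ : E) : ℕ → ℝ → E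
  | 0 => fun _ => v₀
  | n + 1 => fun r => ∫ t in a..r, A t (picardTerm A a v₀ n t)

variable {A : ℝ → E →L[ℝ] E} {a b r : ℝ}

lemma continuousOn_picardTerm (hA : IntervalIntegrable A volume a b) (v₀ : E) (n : ℕ) :
    ContinuousOn (picardTerm A a v₀ n) (uIcc a b) := by
  induction n with
  | zero => exact continuousOn_const
  | succ n ih =>
    exact continuousOn_primitive_interval'
      (intervalIntegrable_clm_apply_of_continuousOn hA ih) left_mem_uIcc

lemma norm_picardTerm_le (hA : IntervalIntegrable A volume a b) (hAc : ContinuousOn A (Ioo a b))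
    (v₀ : E) (n : ℕ) (hr : r ∈ Icc a b) :
    ‖picardTerm A a v₀ n r‖ ≤ ‖v₀‖ * ((∫ t in a..r, ‖A t‖) ^ n / n.factorial) := by
  induction n generalizing r with
  | zero => simp [picardTerm]
  | succ n ih =>
    have hAr : IntervalIntegrable A volume a r :=
      hA.mono_set (uIcc_subset_uIcc_left (Icc_subset_uIcc hr))
    have hcont : ContinuousOn (fun x => (∫ s in a..x, ‖A s‖) ^ n) (uIcc a r) :=
      (continuousOn_primitive_interval' hAr.norm left_mem_uIcc).pow n
    have hle : ∀ t ∈ Ioc a r, ‖A t (picardTerm A a v₀ n t)‖ ≤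
        ‖v₀‖ / n.factorial * (‖A t‖ * (∫ s in a..t, ‖A s‖) ^ n) := fun t ht => calc
      _ ≤ ‖A t‖ * (‖v₀‖ * ((∫ s in a..t, ‖A s‖) ^ n / n.factorial)) :=
        (A t).le_of_opNorm_le_of_le le_rfl (ih ⟨ht.1.le, ht.2.trans hr.2⟩)
      _ = _ := by ring
    calc ‖picardTerm A a v₀ (n + 1) r‖
      _ ≤ ∫ t in a..r, ‖v₀‖ / n.factorial * (‖A t‖ * (∫ s in a..t, ‖A s‖) ^ n) :=
        norm_integral_le_of_norm_le hr.1 (.of_forall hle)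
          ((hAr.norm.mul_continuousOn hcont).const_mul _)
      _ = ‖v₀‖ / n.factorial * ((∫ t in a..r, ‖A t‖) ^ (n + 1) / (n + 1)) := by
        rw [intervalIntegral.integral_const_mul, integral_mul_integral_pow hr.1 hAr.norm
          (hAc.norm.mono (Ioo_subset_Ioo_right hr.2))]
      _ = _ := by
        rw [Nat.factorial_succ]
        push_cast
        field_simp

lemma norm_picardTerm_le_right (hA : IntervalIntegrable A volume a b)
    (hAc : ContinuousOn A (Ioo a b)) (v₀ : E) (n : ℕ) (hr : r ∈ Icc a b) :
    ‖picardTerm A a v₀ n r‖ ≤ ‖v₀‖ * ((∫ t in a..b, ‖A t‖) ^ n / n.factorial) := by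
  refine (norm_picardTerm_le hA hAc v₀ n hr).trans ?_
  gcongr
  · exact integral_nonneg hr.1 fun t _ => norm_nonneg _
  · exact integral_mono_interval le_rfl hr.1 hr.2 (.of_forall fun t => norm_nonneg _) hA.norm

variable [CompleteSpace E]

lemma summable_picardTerm (hA : IntervalIntegrable A volume a b) (hAc : ContinuousOn A (Ioo a b))
    (v₀ : E) (hr : r ∈ Icc a b) : Summable fun n => picardTerm A a v₀ n r :=
  .of_norm_bounded ((Real.summable_pow_div_factorial _).mul_left ‖v₀‖)
    fun n => norm_picardTerm_le_right hA hAc v₀ n hr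

lemma hasDerivAt_picardTerm_succ (hA : IntervalIntegrable A volume a b)
    (hAc : ContinuousOn A (Ioo a b)) (v₀ : E) (n : ℕ) (hr : r ∈ Ioo a b) :
    HasDerivAt (picardTerm A a v₀ (n + 1)) (A r (picardTerm A a v₀ n r)) r := by
  have hcont := continuousOn_picardTerm hA v₀ n
  exact hasDerivAt_integral_of_continuousOn_Ioo
    (intervalIntegrable_clm_apply_of_continuousOn hA hcont)
    (hAc.clm_apply (hcont.mono (Ioo_subset_Icc_self.trans Icc_subset_uIcc))) hr

lemma hasDerivAt_tsum_picardTerm (hA : IntervalIntegrable A volume a b)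
    (hAc : ContinuousOn A (Ioo a b)) (v₀ : E) (hr : r ∈ Ioo a b) :
    HasDerivAt (fun x => ∑' n, picardTerm A a v₀ n x) (A r (∑' n, picardTerm A a v₀ n r)) r := by
  have hsummable {x : ℝ} (hx : x ∈ Ioo a b) : Summable fun n => picardTerm A a v₀ n x :=
    summable_picardTerm hA hAc v₀ (Ioo_subset_Icc_self hx)
  have hAbdd : ∀ᶠ x in 𝓝 r, ‖A x‖ < ‖A r‖ + 1 :=
    (hAc.continuousAt (isOpen_Ioo.mem_nhds hr)).norm.eventually_lt_const (lt_add_one _)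
  obtain ⟨ε, hε, hball⟩ := Metric.eventually_nhds_iff_ball.1
    (hAbdd.and (isOpen_Ioo.eventually_mem hr))
  have hrball : r ∈ Metric.ball r ε := Metric.mem_ball_self hε
  have htail : HasDerivAt (fun x => ∑' n, picardTerm A a v₀ (n + 1) x)
      (∑' n, A r (picardTerm A a v₀ n r)) r :=
    hasDerivAt_tsum_of_isPreconnected
      (((Real.summable_pow_div_factorial _).mul_left ‖v₀‖).mul_left (‖A r‖ + 1))
      Metric.isOpen_ball Metric.isPreconnected_ball
      (fun n x hx => hasDerivAt_picardTerm_succ hA hAc v₀ n (hball x hx).2)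
      (fun n x hx => (A x).le_of_opNorm_le_of_le (hball x hx).1.le
        (norm_picardTerm_le_right hA hAc v₀ n (Ioo_subset_Icc_self (hball x hx).2)))
      hrball ((summable_nat_add_iff 1).2 (hsummable hr)) hrball
  rw [(A r).map_tsum (hsummable hr)]
  refine (htail.const_add v₀).congr_of_eventuallyEq ?_
  filter_upwards [isOpen_Ioo.mem_nhds hr] with x hx using (hsummable hx).tsum_eq_zero_add

lemma tendsto_tsum_picardTerm (hab : a < b) (hA : IntervalIntegrable A volume a b)
    (hAc : ContinuousOn A (Ioo a b)) (v₀ : E) :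
    Tendsto (fun x => ∑' n, picardTerm A a v₀ n x) (𝓝[>] a) (𝓝 v₀) := by
  have hcont : ContinuousOn (fun x => ∑' n, picardTerm A a v₀ n x) (Icc a b) :=
    continuousOn_tsum (fun n => uIcc_of_le hab.le ▸ continuousOn_picardTerm hA v₀ n)
      ((Real.summable_pow_div_factorial _).mul_left ‖v₀‖)
      fun n x hx => norm_picardTerm_le_right hA hAc v₀ n hx
  have hinit : ∑' n, picardTerm A a v₀ n a = v₀ := by
    rw [tsum_eq_single 0 fun n hn => ?_]
    · rfl
    · obtain ⟨m, rfl⟩ := Nat.exists_eq_succ_of_ne_zero hn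
      exact integral_same
  have hlim := hcont a (left_mem_Icc.2 hab.le)
  rw [ContinuousWithinAt, hinit] at hlim
  rw [← nhdsWithin_Ioo_eq_nhdsGT hab]
  exact hlim.mono_left (nhdsWithin_mono a Ioo_subset_Icc_self)

theorem exists_hasDerivAt_clm_apply_tendsto_nhdsGT (hab : a < b)
    (hA : IntegrableAtFilter A (𝓝[>] a)) (hAc : ContinuousOn A (Ioo a b)) (v₀ : E) :
    ∃ v : ℝ → E, (∀ r ∈ Ioo a b, HasDerivAt v (A r (v r)) r) ∧ Tendsto v (𝓝[>] a) (𝓝 v₀) := by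
  have hsub {c : ℝ} (hc : c ∈ Ioo a b) :
      IntervalIntegrable A volume a c ∧ ContinuousOn A (Ioo a c) :=
    ⟨intervalIntegrable_of_integrableAtFilter_of_continuousOn hA hAc hc,
      hAc.mono (Ioo_subset_Ioo_right hc.2.le)⟩
  refine ⟨fun x => ∑' n, picardTerm A a v₀ n x, fun r hr => ?_, ?_⟩
  · obtain ⟨c, hrc, hcb⟩ := exists_between hr.2
    obtain ⟨hAi, hAc'⟩ := hsub ⟨hr.1.trans hrc, hcb⟩
    exact hasDerivAt_tsum_picardTerm hAi hAc' v₀ ⟨hr.1, hrc⟩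
  · obtain ⟨c, hac, hcb⟩ := exists_between hab
    obtain ⟨hAi, hAc'⟩ := hsub ⟨hac, hcb⟩
    exact tendsto_tsum_picardTerm hac hAi hAc' v₀

end Picard

lemma contDiffOn_succ_of_hasDerivAt {F : Type*} [NormedAddCommGroup F] [NormedSpace ℝ F]
    {f f' : ℝ → F} {s : Set ℝ} {n : ℕ} (hs : IsOpen s) (hf : ∀ x ∈ s, HasDerivAt f (f' x) x)
    (hf' : ContDiffOn ℝ n f' s) : ContDiffOn ℝ (n + 1) f s :=
  (contDiffOn_succ_iff_deriv_of_isOpen hs).2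
    ⟨fun x hx => (hf x hx).differentiableAt.differentiableWithinAt, by simp,
      hf'.congr fun x hx => (hf x hx).deriv⟩

lemma isLittleO_const_log_nhdsGT_zero {F : Type*} [NormedAddCommGroup F] (c : F) :
    (fun _ => c) =o[𝓝[>] 0] Real.log :=
  isLittleO_const_left.2 (.inr (tendsto_abs_atBot_atTop.comp Real.tendsto_log_nhdsGT_zero))

lemma isLittleO_log_of_abs_le {f : ℝ → ℝ} {b M : ℝ} (hb : 0 < b)
    (hM : ∀ r ∈ Ioo 0 b, |f r| ≤ M) : f =o[𝓝[>] 0] Real.log :=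
  (IsBigO.of_bound M <| by
    filter_upwards [Ioo_mem_nhdsGT hb] with r hr
    simpa using hM r hr).trans_isLittleO (isLittleO_const_log_nhdsGT_zero (1 : ℝ))

lemma continuousOn_log_Ioo_zero (b : ℝ) : ContinuousOn Real.log (Ioo 0 b) :=
  Real.continuousOn_log.mono fun _ hx => hx.1.ne'

lemma antitoneOn_norm_log_Ioo_zero_one : AntitoneOn (fun t => ‖Real.log t‖) (Ioo 0 1) :=
  fun s hs t ht hst => by
    beta_reduce
    rw [Real.norm_of_nonpos (Real.log_nonpos hs.1.le hs.2.le),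
      Real.norm_of_nonpos (Real.log_nonpos ht.1.le ht.2.le)]
    exact neg_le_neg (Real.log_le_log hs.1 hst)

/-- `y` is a classical solution of `-r⁻¹ (r y')' + q y = 0` on `(0, r₀)`. -/
structure IsRadialSolution (q : ℝ → ℝ) (r₀ : ℝ) (y : ℝ → ℝ) : Prop where
  contDiffOn : ContDiffOn ℝ 2 y (Ioo 0 r₀)
  ode : ∀ r ∈ Ioo 0 r₀, -r⁻¹ * deriv (fun s => s * deriv y s) r + q r * y r = 0

/-- The function `v₁ + v₂ ln r` with coefficient functions `v = (v₁, v₂)` with respect to the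
solutions `1` and `ln r` of the unperturbed equation. -/
def ofLogFrame (v : ℝ → ℝ × ℝ) (r : ℝ) : ℝ :=
  (v r).1 + (v r).2 * Real.log r

/-- The coefficients `v` of `y` in `y = v₁ + v₂ ln r`, made unique by the variation-of-constants
condition `y' = v₂ (ln r)'`. -/
def logFrame (y : ℝ → ℝ) (r : ℝ) : ℝ × ℝ :=
  (y r - r * deriv y r * Real.log r, r * deriv y r)

/-- The coefficient matrix `r q(r) • [[-ln r, -(ln r)²], [1, ln r]]` of the linear system satisfied
by `logFrame y`, written as a rank-one operator. -/
def logFrameCoeff (q : ℝ → ℝ) (r : ℝ) : ℝ × ℝ →L[ℝ] ℝ × ℝ :=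
  (r * q r) • (ContinuousLinearMap.fst ℝ ℝ ℝ +
    Real.log r • ContinuousLinearMap.snd ℝ ℝ ℝ).smulRight (-Real.log r, 1)

/-- `v` solves the first-order system on `(0, r₀)` equivalent to the radial equation for
`ofLogFrame v`. -/
def IsLogFrameSolution (q : ℝ → ℝ) (r₀ : ℝ) (v : ℝ → ℝ × ℝ) : Prop :=
  ∀ r ∈ Ioo 0 r₀, HasDerivAt v (logFrameCoeff q r (v r)) r

/-- The determinant of two coefficient vectors, which is the weighted Wronskian `r (y z' - y' z)`
of the corresponding functions `y` and `z`. -/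
def logFrameWronskian (v w : ℝ × ℝ) : ℝ :=
  v.1 * w.2 - v.2 * w.1

lemma ofLogFrame_logFrame (y : ℝ → ℝ) : ofLogFrame (logFrame y) = y := by
  ext r
  simp [ofLogFrame, logFrame]

section LogFrame

variable {q y : ℝ → ℝ} {r₀ r : ℝ} {v w : ℝ → ℝ × ℝ}

lemma logFrameCoeff_apply (q : ℝ → ℝ) (v : ℝ → ℝ × ℝ) (r : ℝ) :
    logFrameCoeff q r (v r) =
      (-Real.log r * (r * q r * ofLogFrame v r), r * q r * ofLogFrame v r) := by
  ext <;> simp [logFrameCoeff, ofLogFrame, mul_comm, mul_left_comm]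

lemma continuousOn_logFrameCoeff (hq : ContinuousOn q (Ioo 0 r₀)) :
    ContinuousOn (logFrameCoeff q) (Ioo 0 r₀) := by
  have hlog := continuousOn_log_Ioo_zero r₀
  have hfun : ContinuousOn (fun r => ContinuousLinearMap.fst ℝ ℝ ℝ +
      Real.log r • ContinuousLinearMap.snd ℝ ℝ ℝ) (Ioo 0 r₀) := by fun_prop
  have hvec : ContinuousOn (fun r => (-Real.log r, (1 : ℝ))) (Ioo 0 r₀) := by fun_prop
  exact (continuousOn_id.mul hq).smul <|
    (ContinuousLinearMap.smulRightL ℝ (ℝ × ℝ) (ℝ × ℝ)).continuous₂.comp_continuousOn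
      (hfun.prodMk hvec)

lemma mul_mul_log_sq_isBigO (q : ℝ → ℝ) :
    (fun r => r * q r * (Real.log r * Real.log r)) =O[𝓝[>] 0]
      fun r => r * Real.log r ^ 2 * |q r| :=
  .of_bound 1 <| .of_forall fun r => le_of_eq <| by
    simp only [norm_mul, norm_pow, Real.norm_eq_abs, abs_abs]
    ring

lemma logFrameCoeff_isBigO (q : ℝ → ℝ) :
    logFrameCoeff q =O[𝓝[>] 0] fun r => r * Real.log r ^ 2 * |q r| := by
  have hfun : (fun r => ContinuousLinearMap.fst ℝ ℝ ℝ +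
      Real.log r • ContinuousLinearMap.snd ℝ ℝ ℝ) =O[𝓝[>] 0] Real.log :=
    (isLittleO_const_log_nhdsGT_zero _).isBigO.add <|
      .of_bound ‖ContinuousLinearMap.snd ℝ ℝ ℝ‖ <| .of_forall fun r => by
        rw [norm_smul, mul_comm]
  have hvec : (fun r => (-Real.log r, (1 : ℝ))) =O[𝓝[>] 0] Real.log :=
    (isBigO_refl _ _).neg_left.prod_left (isLittleO_const_log_nhdsGT_zero 1).isBigO
  have hrankOne : (fun r => (ContinuousLinearMap.fst ℝ ℝ ℝ +
      Real.log r • ContinuousLinearMap.snd ℝ ℝ ℝ).smulRight (-Real.log r, (1 : ℝ)))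
      =O[𝓝[>] 0] fun r => Real.log r * Real.log r :=
    .of_norm_left <| (hfun.norm_left.mul hvec.norm_left).congr_left fun r =>
      (ContinuousLinearMap.norm_smulRight_apply _ _).symm
  exact ((isBigO_refl (fun r => r * q r) _).smul hrankOne).trans (mul_mul_log_sq_isBigO q)

lemma integrableAtFilter_logFrameCoeff (hr₀ : 0 < r₀) (hq : ContinuousOn q (Ioo 0 r₀))
    (hqi : IntegrableAtFilter (fun r => r * Real.log r ^ 2 * |q r|) (𝓝[>] 0)) :
    IntegrableAtFilter (logFrameCoeff q) (𝓝[>] 0) :=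
  (logFrameCoeff_isBigO q).integrableAtFilter
    ⟨Ioo 0 r₀, Ioo_mem_nhdsGT hr₀,
      (continuousOn_logFrameCoeff hq).aestronglyMeasurable measurableSet_Ioo⟩ hqi

lemma exists_isLogFrameSolution_tendsto (hr₀ : 0 < r₀) (hq : ContinuousOn q (Ioo 0 r₀))
    (hqi : IntegrableAtFilter (fun r => r * Real.log r ^ 2 * |q r|) (𝓝[>] 0)) (v₀ : ℝ × ℝ) :
    ∃ v, IsLogFrameSolution q r₀ v ∧ Tendsto v (𝓝[>] 0) (𝓝 v₀) :=
  exists_hasDerivAt_clm_apply_tendsto_nhdsGT hr₀ (integrableAtFilter_logFrameCoeff hr₀ hq hqi)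
    (continuousOn_logFrameCoeff hq) v₀

lemma IsLogFrameSolution.hasDerivAt_fst (hv : IsLogFrameSolution q r₀ v) (hr : r ∈ Ioo 0 r₀) :
    HasDerivAt (fun s => (v s).1) (-Real.log r * (r * q r * ofLogFrame v r)) r := by
  have h := hasFDerivAt_fst.comp_hasDerivAt r (hv r hr)
  rwa [logFrameCoeff_apply] at h

lemma IsLogFrameSolution.hasDerivAt_snd (hv : IsLogFrameSolution q r₀ v) (hr : r ∈ Ioo 0 r₀) :
    HasDerivAt (fun s => (v s).2) (r * q r * ofLogFrame v r) r := by
  have h := hasFDerivAt_snd.comp_hasDerivAt r (hv r hr)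
  rwa [logFrameCoeff_apply] at h

lemma IsLogFrameSolution.hasDerivAt_ofLogFrame (hv : IsLogFrameSolution q r₀ v)
    (hr : r ∈ Ioo 0 r₀) : HasDerivAt (ofLogFrame v) ((v r).2 / r) r := by
  refine ((hv.hasDerivAt_fst hr).add
    ((hv.hasDerivAt_snd hr).mul (Real.hasDerivAt_log hr.1.ne'))).congr_deriv ?_
  ring

lemma IsLogFrameSolution.continuousOn_ofLogFrame (hv : IsLogFrameSolution q r₀ v) :
    ContinuousOn (ofLogFrame v) (Ioo 0 r₀) :=
  fun _ hr => (hv.hasDerivAt_ofLogFrame hr).continuousAt.continuousWithinAt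

lemma IsLogFrameSolution.isRadialSolution (hq : ContinuousOn q (Ioo 0 r₀))
    (hv : IsLogFrameSolution q r₀ v) : IsRadialSolution q r₀ (ofLogFrame v) where
  contDiffOn := by
    have hsnd : ContDiffOn ℝ 1 (fun r => (v r).2) (Ioo 0 r₀) :=
      contDiffOn_succ_of_hasDerivAt (n := 0) isOpen_Ioo (fun r hr => hv.hasDerivAt_snd hr)
        (contDiffOn_zero.2 ((continuousOn_id.mul hq).mul hv.continuousOn_ofLogFrame))
    exact contDiffOn_succ_of_hasDerivAt (n := 1) isOpen_Ioo
      (fun r hr => hv.hasDerivAt_ofLogFrame hr) (hsnd.div contDiffOn_id fun r hr => hr.1.ne')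
  ode r hr := by
    have hflux : (fun s => s * deriv (ofLogFrame v) s) =ᶠ[𝓝 r] fun s => (v s).2 := by
      filter_upwards [isOpen_Ioo.mem_nhds hr] with s hs
      rw [(hv.hasDerivAt_ofLogFrame hs).deriv, mul_div_cancel₀ _ hs.1.ne']
    have hr0 := hr.1.ne'
    rw [hflux.deriv_eq, (hv.hasDerivAt_snd hr).deriv]
    field_simp
    ring

lemma IsRadialSolution.isLogFrameSolution_logFrame (hy : IsRadialSolution q r₀ y) :
    IsLogFrameSolution q r₀ (logFrame y) := fun r hr => by
  have hr0 := hr.1.ne'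
  obtain ⟨hdiff, -, hderiv⟩ :=
    (contDiffOn_succ_iff_deriv_of_isOpen (n := 1) isOpen_Ioo).1 hy.contDiffOn
  have hd : HasDerivAt y (deriv y r) r :=
    (hdiff.differentiableAt (isOpen_Ioo.mem_nhds hr)).hasDerivAt
  have hflux : HasDerivAt (fun s => s * deriv y s) (r * q r * y r) r := by
    have hdd : DifferentiableAt ℝ (deriv y) r :=
      (hderiv.differentiableOn one_ne_zero).differentiableAt (isOpen_Ioo.mem_nhds hr)
    have hode : deriv (fun s => s * deriv y s) r = r * q r * y r := by
      linear_combination (-r) * hy.ode r hr -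
        deriv (fun s => s * deriv y s) r * mul_inv_cancel₀ hr0
    exact hode ▸ (differentiableAt_id.mul hdd).hasDerivAt
  refine ((hd.sub (hflux.mul (Real.hasDerivAt_log hr0))).prodMk hflux).congr_deriv ?_
  rw [logFrameCoeff_apply, ofLogFrame_logFrame]
  congr 1
  field_simp
  ring

lemma IsLogFrameSolution.exists_wronskian_eq (hv : IsLogFrameSolution q r₀ v)
    (hw : IsLogFrameSolution q r₀ w) : ∃ c, ∀ r ∈ Ioo 0 r₀, logFrameWronskian (v r) (w r) = c := by
  have hderiv : ∀ r ∈ Ioo 0 r₀, HasDerivAt (fun s => logFrameWronskian (v s) (w s)) 0 r := by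
    intro r hr
    refine (((hv.hasDerivAt_fst hr).mul (hw.hasDerivAt_snd hr)).sub
      ((hv.hasDerivAt_snd hr).mul (hw.hasDerivAt_fst hr))).congr_deriv ?_
    simp only [ofLogFrame]
    ring
  exact isOpen_Ioo.exists_is_const_of_deriv_eq_zero isPreconnected_Ioo
    (fun r hr => (hderiv r hr).differentiableAt.differentiableWithinAt)
    fun r hr => (hderiv r hr).deriv

lemma IsLogFrameSolution.wronskian_eq_of_tendsto (hv : IsLogFrameSolution q r₀ v)
    (hw : IsLogFrameSolution q r₀ w) {v₀ w₀ : ℝ × ℝ} (hv₀ : Tendsto v (𝓝[>] 0) (𝓝 v₀))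
    (hw₀ : Tendsto w (𝓝[>] 0) (𝓝 w₀)) (hr : r ∈ Ioo 0 r₀) :
    logFrameWronskian (v r) (w r) = logFrameWronskian v₀ w₀ := by
  obtain ⟨c, hc⟩ := hv.exists_wronskian_eq hw
  have hlim : Tendsto (fun s => logFrameWronskian (v s) (w s)) (𝓝[>] 0)
      (𝓝 (logFrameWronskian v₀ w₀)) :=
    (hv₀.fst_nhds.mul hw₀.snd_nhds).sub (hv₀.snd_nhds.mul hw₀.fst_nhds)
  have hconst : Tendsto (fun s => logFrameWronskian (v s) (w s)) (𝓝[>] 0) (𝓝 c) := by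
    refine tendsto_const_nhds.congr' ?_
    filter_upwards [Ioo_mem_nhdsGT (hr.1.trans hr.2)] with s hs using (hc s hs).symm
  rw [hc r hr, tendsto_nhds_unique hconst hlim]

lemma IsLogFrameSolution.exists_eq_smul_add_smul (hv : IsLogFrameSolution q r₀ v)
    (hw : IsLogFrameSolution q r₀ w) {v₀ w₀ : ℝ × ℝ} (hv₀ : Tendsto v (𝓝[>] 0) (𝓝 v₀))
    (hw₀ : Tendsto w (𝓝[>] 0) (𝓝 w₀)) (hne : logFrameWronskian v₀ w₀ ≠ 0) {z : ℝ → ℝ × ℝ}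
    (hz : IsLogFrameSolution q r₀ z) :
    ∃ a b : ℝ, ∀ r ∈ Ioo 0 r₀, z r = a • v r + b • w r := by
  obtain ⟨cw, hcw⟩ := hz.exists_wronskian_eq hw
  obtain ⟨cv, hcv⟩ := hv.exists_wronskian_eq hz
  refine ⟨cw / logFrameWronskian v₀ w₀, cv / logFrameWronskian v₀ w₀, fun r hr => ?_⟩
  rw [← hcw r hr, ← hcv r hr]
  have h := hv.wronskian_eq_of_tendsto hw hv₀ hw₀ hr
  rw [← h] at hne ⊢
  ext <;> simp only [Prod.fst_add, Prod.snd_add, Prod.smul_fst, Prod.smul_snd, smul_eq_mul] <;>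
    field_simp <;> simp only [logFrameWronskian] <;> ring

lemma ofLogFrame_isBigO_log {v₀ : ℝ × ℝ} (hv₀ : Tendsto v (𝓝[>] 0) (𝓝 v₀)) :
    ofLogFrame v =O[𝓝[>] 0] Real.log := by
  refine ((hv₀.fst_nhds.isBigO_one ℝ).trans (isLittleO_const_log_nhdsGT_zero 1).isBigO).add ?_
  simpa using (hv₀.snd_nhds.isBigO_one ℝ).mul (isBigO_refl Real.log (𝓝[>] 0))

lemma IsLogFrameSolution.tendsto_ofLogFrame_sub (hr₀ : 0 < r₀) (hq : ContinuousOn q (Ioo 0 r₀))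
    (hqi : IntegrableAtFilter (fun r => r * Real.log r ^ 2 * |q r|) (𝓝[>] 0))
    (hv : IsLogFrameSolution q r₀ v) {v₀ : ℝ × ℝ} (hv₀ : Tendsto v (𝓝[>] 0) (𝓝 v₀)) :
    Tendsto (fun r => ofLogFrame v r - (v₀.1 + v₀.2 * Real.log r)) (𝓝[>] 0) (𝓝 0) := by
  have hbigO : (fun r => Real.log r * (r * q r * ofLogFrame v r)) =O[𝓝[>] 0]
      fun r => r * Real.log r ^ 2 * |q r| :=
    (((isBigO_refl (fun r => r * q r * Real.log r) _).mul (ofLogFrame_isBigO_log hv₀)).congr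
      (fun r => by ring) (fun r => by ring)).trans (mul_mul_log_sq_isBigO q)
  have hcont : ContinuousOn (fun r => Real.log r * (r * q r * ofLogFrame v r)) (Ioo 0 r₀) :=
    (continuousOn_log_Ioo_zero r₀).mul ((continuousOn_id.mul hq).mul hv.continuousOn_ofLogFrame)
  have hint : IntegrableAtFilter (fun r => Real.log r • (r * q r * ofLogFrame v r)) (𝓝[>] 0) :=
    hbigO.integrableAtFilter
      ⟨Ioo 0 r₀, Ioo_mem_nhdsGT hr₀, hcont.aestronglyMeasurable measurableSet_Ioo⟩ hqi
  have hsnd : Tendsto (fun r => Real.log r • ((v r).2 - v₀.2)) (𝓝[>] 0) (𝓝 0) :=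
    tendsto_smul_sub_of_integrableAtFilter_smul_deriv (lt_min hr₀ one_pos)
      (antitoneOn_norm_log_Ioo_zero_one.mono (Ioo_subset_Ioo_right (min_le_right _ _)))
      (fun r hr => hv.hasDerivAt_snd (Ioo_subset_Ioo_right (min_le_left _ _) hr))
      hv₀.snd_nhds hint
  have hfst : Tendsto (fun r => (v r).1 - v₀.1) (𝓝[>] 0) (𝓝 0) :=
    tendsto_sub_nhds_zero_iff.2 hv₀.fst_nhds
  have hsum := hfst.add hsnd
  rw [add_zero] at hsum
  refine hsum.congr fun r => ?_
  simp only [ofLogFrame, smul_eq_mul]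
  ring

lemma snd_eq_zero_of_ofLogFrame_isLittleO_log {v₀ : ℝ × ℝ} (hv₀ : Tendsto v (𝓝[>] 0) (𝓝 v₀))
    (ho : ofLogFrame v =o[𝓝[>] 0] Real.log) : v₀.2 = 0 := by
  have hfst : (fun r => (v r).1) =o[𝓝[>] 0] Real.log :=
    (hv₀.fst_nhds.isBigO_one ℝ).trans_isLittleO (isLittleO_const_log_nhdsGT_zero 1)
  have hquot : Tendsto (fun r => (ofLogFrame v r - (v r).1) / Real.log r) (𝓝[>] 0) (𝓝 0) :=
    (ho.sub hfst).tendsto_div_nhds_zero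
  refine tendsto_nhds_unique hv₀.snd_nhds (hquot.congr' ?_)
  filter_upwards [Ioo_mem_nhdsGT one_pos] with r hr
  have hlog := (Real.log_neg hr.1 hr.2).ne
  simp only [ofLogFrame]
  field_simp
  ring

lemma IsRadialSolution.exists_eq_mul_of_isLittleO_log (hr₀ : 0 < r₀) {vsing vreg : ℝ → ℝ × ℝ}
    (hsing : IsLogFrameSolution q r₀ vsing) (hsing₀ : Tendsto vsing (𝓝[>] 0) (𝓝 (0, 1)))
    (hreg : IsLogFrameSolution q r₀ vreg) (hreg₀ : Tendsto vreg (𝓝[>] 0) (𝓝 (1, 0)))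
    (hy : IsRadialSolution q r₀ y) (hyo : y =o[𝓝[>] 0] Real.log) :
    ∃ c, ∀ r ∈ Ioo 0 r₀, y r = c * ofLogFrame vreg r := by
  obtain ⟨a, b, hab⟩ := hsing.exists_eq_smul_add_smul hreg hsing₀ hreg₀
    (by simp [logFrameWronskian]) hy.isLogFrameSolution_logFrame
  have hlim : Tendsto (logFrame y) (𝓝[>] 0) (𝓝 (a • (0, 1) + b • (1, 0))) := by
    refine ((hsing₀.const_smul a).add (hreg₀.const_smul b)).congr' ?_
    filter_upwards [Ioo_mem_nhdsGT hr₀] with r hr using (hab r hr).symm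
  have ha : a = 0 := by
    simpa using snd_eq_zero_of_ofLogFrame_isLittleO_log hlim ((ofLogFrame_logFrame y).symm ▸ hyo)
  refine ⟨b, fun r hr => ?_⟩
  rw [← congrFun (ofLogFrame_logFrame y) r, ofLogFrame, ofLogFrame, hab r hr, ha]
  simp only [zero_smul, zero_add, Prod.smul_fst, Prod.smul_snd, smul_eq_mul]
  ring

theorem bessel_singular_solution_m_zero_general (hr₀ : 0 < r₀) (hq : ContinuousOn q (Ioo 0 r₀))
    (hqi : IntegrableAtFilter (fun r => r * Real.log r ^ 2 * |q r|) (𝓝[>] 0)) :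
    ∃ ysing yreg : ℝ → ℝ,
      IsRadialSolution q r₀ ysing ∧ Tendsto (fun r => ysing r - Real.log r) (𝓝[>] 0) (𝓝 0) ∧
      IsRadialSolution q r₀ yreg ∧ Tendsto yreg (𝓝[>] 0) (𝓝 1) ∧
      ∀ z, IsRadialSolution q r₀ z → z =o[𝓝[>] 0] Real.log →
        ∃ c, ∀ r ∈ Ioo 0 r₀, z r = c * yreg r := by
  obtain ⟨vsing, hsing, hsing₀⟩ := exists_isLogFrameSolution_tendsto hr₀ hq hqi (0, 1)
  obtain ⟨vreg, hreg, hreg₀⟩ := exists_isLogFrameSolution_tendsto hr₀ hq hqi (1, 0)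
  refine ⟨ofLogFrame vsing, ofLogFrame vreg, hsing.isRadialSolution hq, ?_,
    hreg.isRadialSolution hq, ?_, fun z hz hzo =>
      hz.exists_eq_mul_of_isLittleO_log hr₀ hsing hsing₀ hreg hreg₀ hzo⟩
  · simpa using hsing.tendsto_ofLogFrame_sub hr₀ hq hqi hsing₀
  · exact tendsto_sub_nhds_zero_iff.1 (by simpa using hreg.tendsto_ofLogFrame_sub hr₀ hq hqi hreg₀)

end LogFrame

/-- Lemma 4.1 (case `m = 0`, singular solution) of the paper: if `q` is continuous on
`(0, r₀)` with `r₀ < 1` and `∫₀^{r₀} r (ln r)² |q(r)| dr < ∞`, then the equation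
`-r⁻¹ (r y')' + q y = 0` has a singular solution with `y(r) = ln r + o(1)` as `r → 0` and a
regular solution with `y(r) → 1`; moreover every bounded solution is a constant multiple of
the regular one. -/
theorem bessel_singular_solution_m_zero (r₀ : ℝ) (hr₀ : r₀ ∈ Set.Ioo (0:ℝ) 1)
    (q : ℝ → ℝ) (hq : ContinuousOn q (Set.Ioo 0 r₀))
    (hqi : IntegrableOn (fun r => r * (Real.log r) ^ 2 * |q r|) (Set.Ioo 0 r₀)) :
    ∃ ysing yreg : ℝ → ℝ,
      ContDiffOn ℝ 2 ysing (Set.Ioo 0 r₀) ∧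
      (∀ r ∈ Set.Ioo (0:ℝ) r₀,
        -r⁻¹ * deriv (fun s => s * deriv ysing s) r + q r * ysing r = 0) ∧
      Tendsto (fun r => ysing r - Real.log r) (nhdsWithin 0 (Set.Ioi 0)) (nhds 0) ∧
      ContDiffOn ℝ 2 yreg (Set.Ioo 0 r₀) ∧
      (∀ r ∈ Set.Ioo (0:ℝ) r₀,
        -r⁻¹ * deriv (fun s => s * deriv yreg s) r + q r * yreg r = 0) ∧
      Tendsto yreg (nhdsWithin 0 (Set.Ioi 0)) (nhds 1) ∧
      (∀ z : ℝ → ℝ, ContDiffOn ℝ 2 z (Set.Ioo 0 r₀) →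
        (∀ r ∈ Set.Ioo (0:ℝ) r₀,
          -r⁻¹ * deriv (fun s => s * deriv z s) r + q r * z r = 0) →
        (∃ M : ℝ, ∀ r ∈ Set.Ioo (0:ℝ) r₀, |z r| ≤ M) →
        ∃ c : ℝ, ∀ r ∈ Set.Ioo (0:ℝ) r₀, z r = c * yreg r) := by
  obtain ⟨ysing, yreg, hsing, hsing_log, hreg, hreg_one, hunique⟩ :=
    bessel_singular_solution_m_zero_general hr₀.1 hq ⟨_, Ioo_mem_nhdsGT hr₀.1, hqi⟩
  exact ⟨ysing, yreg, hsing.contDiffOn, hsing.ode, hsing_log, hreg.contDiffOn, hreg.ode, hreg_one,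
    fun z hz hode ⟨_, hM⟩ => hunique z ⟨hz, hode⟩ (isLittleO_log_of_abs_le hr₀.1 hM)⟩
end
end

section
/- Let m ≥ 1 be an integer, r₀ > 0, and let q : (0, r₀) → ℝ be continuous with ∫₀^{r₀} r q(r)² dr < ∞. If ψ₁ and ψ₂ are twice continuously differentiable solutions of the equation −r⁻¹(r y'(r))' + m² r⁻² y(r) + q(r) y(r) = 0 on (0, r₀) with ∫₀^{r₀} |ψ_i(r)|² r dr < ∞ for i = 1, 2, then ψ₁ and ψ₂ are linearly dependent. Moreover, every such square-integrable solution ψ satisfies ψ(r) = O(r^m) and ψ'(r) = O(r^{m−1}) as r → 0. -/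
open MeasureTheory Set Filter Asymptotics

noncomputable section

/-!
With `v = r ψ'` the equation becomes the system `ψ' = v / r`, `v' = (ν² / r + r q) ψ`, for which
`((v + ν ψ) r ^ (-ν))' = r q ψ r ^ (-ν)` and `((v - ν ψ) r ^ ν)' = r q ψ r ^ ν`. Integrate the
first relation from `b` downwards and the second from `a` upwards. If `∫ |s q| ≤ ν / 2` on `[a, b]`,
then evaluating at a maximum of `|ψ| / (A r ^ ν + B r ^ (-ν))` shows that `ψ` is controlled on
`[a, b]` by the datum `v + ν ψ` at `b` and the datum `v - ν ψ` at `a`.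

Since `1 / r` is not integrable at `0`, square integrability gives `ψ(a) a ^ ν → 0` along some
`a → 0`, and in that limit the datum at `a` disappears. What remains is
`|v ± ν ψ| ≤ C |v(b) + ν ψ(b)| (r / b) ^ ν`, which yields the growth rates, and shows that the
single number `v(b) + ν ψ(b)` determines the solution, so that two solutions are linearly dependent.
-/

open scoped Topology

theorem two_mul_mul_abs_le {ν : ℝ} (hν : 0 ≤ ν) (x y : ℝ) :
    2 * ν * |x| ≤ |y + ν * x| + |y - ν * x| := by
  calc
    2 * ν * |x| = |(y + ν * x) - (y - ν * x)| := by
      rw [← abs_of_nonneg (by positivity : 0 ≤ 2 * ν), ← abs_mul]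
      ring_nf
    _ ≤ |y + ν * x| + |y - ν * x| := abs_sub _ _

theorem tendsto_rpow_nhdsGT_zero {ν : ℝ} (hν : 0 < ν) :
    Tendsto (fun r : ℝ => r ^ ν) (𝓝[>] 0) (𝓝 0) := by
  have hcont := (Real.continuous_rpow_const hν.le).tendsto 0
  rw [Real.zero_rpow hν.ne'] at hcont
  exact hcont.mono_left nhdsWithin_le_nhds

theorem tendsto_mul_rpow_zero_of_isBigO {ν : ℝ} (hν : 0 < ν) {f : ℝ → ℝ}
    (hf : f =O[𝓝[>] 0] fun r : ℝ => r ^ ν) :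
    Tendsto (fun r => f r * r ^ ν) (𝓝[>] 0) (𝓝 0) := by
  have hpow := tendsto_rpow_nhdsGT_zero hν
  exact (hf.mul (isBigO_refl _ _)).trans_tendsto (by simpa using hpow.mul hpow)

theorem isBigO_rpow_sub_one_of_id_mul {ν : ℝ} {f : ℝ → ℝ}
    (hf : (fun r => r * f r) =O[𝓝[>] 0] fun r : ℝ => r ^ ν) :
    f =O[𝓝[>] 0] fun r : ℝ => r ^ (ν - 1) := by
  refine ((isBigO_refl (fun r : ℝ => r⁻¹) (𝓝[>] 0)).mul hf).congr' ?_ ?_ <;>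
    filter_upwards [self_mem_nhdsWithin] with r hr
  · exact inv_mul_cancel_left₀ (ne_of_gt hr) (f r)
  · rw [Real.rpow_sub_one (ne_of_gt hr), div_eq_inv_mul]

theorem not_integrableAtFilter_of_inv_isBigO_nhdsGT {F : Type*} [NormedAddCommGroup F]
    {g : ℝ → F} (hg : (fun r : ℝ => r⁻¹) =O[𝓝[>] 0] g) : ¬ IntegrableAtFilter g (𝓝[>] 0) := by
  rintro ⟨s, hs, hgs⟩
  refine not_integrableOn_of_tendsto_norm_atTop_of_deriv_isBigO_filter (f := Real.log) (𝓝[>] 0) hs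
    ?_ (tendsto_abs_atBot_atTop.comp Real.tendsto_log_nhdsGT_zero) ?_ hgs
  · filter_upwards [self_mem_nhdsWithin] with r hr
    exact Real.differentiableAt_log (ne_of_gt hr)
  · simpa only [Real.deriv_log'] using hg

theorem mapClusterPt_mul_rpow_zero_of_integrableAtFilter {ν : ℝ} (hν : 1 ≤ ν) {ψ : ℝ → ℝ}
    (hψ : IntegrableAtFilter (fun r => ψ r ^ 2 * r) (𝓝[>] 0)) :
    MapClusterPt 0 (𝓝[>] 0) fun r => ψ r * r ^ ν := by
  rw [Metric.nhds_basis_ball.mapClusterPt_iff_frequently]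
  intro ε hε hfar
  refine not_integrableAtFilter_of_inv_isBigO_nhdsGT (IsBigO.of_bound (ε ^ 2)⁻¹ ?_) hψ
  filter_upwards [hfar, Ioo_mem_nhdsGT one_pos] with r hr ⟨hr0, hr1⟩
  have hεr : ε ≤ |ψ r| * r := calc
    ε ≤ |ψ r| * r ^ ν := by
      simpa [abs_mul, abs_of_pos (Real.rpow_pos_of_pos hr0 ν)] using hr
    _ ≤ |ψ r| * r ^ (1 : ℝ) :=
      mul_le_mul_of_nonneg_left (Real.rpow_le_rpow_of_exponent_ge hr0 hr1.le hν) (abs_nonneg _)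
    _ = |ψ r| * r := by rw [Real.rpow_one]
  have hsq : ε ^ 2 ≤ ψ r ^ 2 * r * r := calc
    ε ^ 2 ≤ (|ψ r| * r) ^ 2 := by gcongr
    _ = ψ r ^ 2 * r * r := by rw [mul_pow, sq_abs]; ring
  rw [Real.norm_of_nonneg (by positivity), Real.norm_of_nonneg (by positivity),
    inv_le_iff_one_le_mul₀ hr0, mul_assoc, ← div_eq_inv_mul]
  exact (one_le_div₀ (by positivity)).2 hsq

theorem eqOn_zero_of_hasDerivAt_clm {E : Type*} [NormedAddCommGroup E] [NormedSpace ℝ E]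
    {L : ℝ → E →L[ℝ] E} {f : ℝ → E} {α β t₀ : ℝ} (hL : ContinuousOn L (Ioo α β))
    (hf : ∀ t ∈ Ioo α β, HasDerivAt f (L t (f t)) t) (ht₀ : t₀ ∈ Ioo α β) (hft₀ : f t₀ = 0) :
    EqOn f 0 (Ioo α β) := by
  intro t ht
  obtain ⟨a, hαa, ha⟩ := exists_between (lt_min ht₀.1 ht.1)
  obtain ⟨b, hb, hbβ⟩ := exists_between (max_lt ht₀.2 ht.2)
  rw [lt_min_iff] at ha
  rw [max_lt_iff] at hb
  have hsub : Icc a b ⊆ Ioo α β := Icc_subset_Ioo hαa hbβ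
  obtain ⟨K, hK⟩ := isCompact_Icc.exists_bound_of_continuousOn (hL.mono hsub)
  have hLip : ∀ s ∈ Ioo a b, LipschitzOnWith K.toNNReal (L s) univ := fun s hs =>
    ((L s).lipschitz.weaken
      (NNReal.le_toNNReal_of_coe_le (hK s (Ioo_subset_Icc_self hs)))).lipschitzOnWith
  refine ODE_solution_unique_of_mem_Ioo hLip ⟨ha.1, hb.1⟩
    (fun s hs => ⟨hf s (hsub (Ioo_subset_Icc_self hs)), mem_univ _⟩)
    (fun s _ => ⟨?_, mem_univ _⟩) hft₀ ⟨ha.2, hb.2⟩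
  simp [Pi.zero_def, hasDerivAt_const]

theorem eventually_integral_norm_le_of_integrableAtFilter {E : Type*} [NormedAddCommGroup E]
    {f : ℝ → E} {c δ : ℝ} (hf : IntegrableAtFilter f (𝓝[>] c)) (hδ : 0 < δ) :
    ∀ᶠ b in 𝓝[>] c, ∀ a ∈ Ioc c b, ∫ s in a..b, ‖f s‖ ≤ δ := by
  obtain ⟨t, ht, hft⟩ := hf.norm
  obtain ⟨d, hcd, hd⟩ := (nhdsGT_basis c).mem_iff.1 ht
  have hint : IntervalIntegrable (fun s => ‖f s‖) volume c d :=
    (intervalIntegrable_iff_integrableOn_Ioo_of_le hcd.le).2 (hft.mono_set hd)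
  have hprim : Tendsto (fun b => ∫ s in c..b, ‖f s‖) (𝓝[>] c) (𝓝 0) := by
    have hcont := intervalIntegral.continuousOn_primitive_interval' hint left_mem_uIcc c
      left_mem_uIcc
    rw [ContinuousWithinAt, intervalIntegral.integral_same, uIcc_of_le hcd.le] at hcont
    rw [← nhdsWithin_Ioo_eq_nhdsGT hcd]
    exact hcont.mono_left (nhdsWithin_mono c Ioo_subset_Icc_self)
  filter_upwards [hprim.eventually_le_const hδ, Ioo_mem_nhdsGT hcd] with b hb hbd a ha
  refine le_trans (intervalIntegral.integral_mono_interval ha.1.le ha.2 le_rfl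
    (Eventually.of_forall fun s => norm_nonneg (f s)) (hint.mono_set ?_)) hb
  rw [uIcc_of_le hcd.le, uIcc_of_le hbd.1.le]
  exact Icc_subset_Icc_right hbd.2.le

theorem integrable_mul_of_integrable_mul_sq {α : Type*} {_ : MeasurableSpace α} {μ : Measure α}
    {w q : α → ℝ} (hw : Integrable w μ) (hw0 : 0 ≤ᵐ[μ] w) (hq : AEStronglyMeasurable q μ)
    (hwq : Integrable (fun x => w x * q x ^ 2) μ) : Integrable (fun x => w x * q x) μ := by
  refine (hwq.add hw).mono' (hw.aestronglyMeasurable.mul hq) ?_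
  filter_upwards [hw0] with x hx
  have hx : 0 ≤ w x := hx
  have hqx : |q x| ≤ q x ^ 2 + 1 := by
    rw [← sq_abs]
    nlinarith [sq_nonneg (|q x| - 1), abs_nonneg (q x)]
  calc
    ‖w x * q x‖ = w x * |q x| := by rw [Real.norm_eq_abs, abs_mul, abs_of_nonneg hx]
    _ ≤ w x * (q x ^ 2 + 1) := by gcongr
    _ = w x * q x ^ 2 + w x := by ring

theorem integrableAtFilter_id_mul_of_integrableOn_id_mul_sq {q : ℝ → ℝ} {r₀ : ℝ} (hr₀ : 0 < r₀)
    (hq : ContinuousOn q (Ioo 0 r₀)) (hqi : IntegrableOn (fun r => r * q r ^ 2) (Ioo 0 r₀)) :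
    IntegrableAtFilter (fun r => r * q r) (𝓝[>] 0) :=
  ⟨_, Ioo_mem_nhdsGT hr₀, integrable_mul_of_integrable_mul_sq
    (continuous_id.integrableOn_Icc.mono_set Ioo_subset_Icc_self)
    (ae_restrict_of_forall_mem measurableSet_Ioo fun _ hr => hr.1.le)
    (hq.aestronglyMeasurable measurableSet_Ioo) hqi⟩

theorem abs_intervalIntegral_mul_le {f g : ℝ → ℝ} {a b x y C : ℝ}
    (hf : IntervalIntegrable f volume a b) (hx : x ∈ Icc a b) (hy : y ∈ Icc a b)
    (hg : ∀ s ∈ uIcc x y, |g s| ≤ C) :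
    |∫ s in x..y, f s * g s| ≤ C * ∫ s in a..b, |f s| := by
  have hC : 0 ≤ C := (abs_nonneg _).trans (hg x left_mem_uIcc)
  have hsub : uIoc x y ⊆ uIoc a b := by
    rw [uIoc_of_le (hx.1.trans hx.2)]
    exact Ioc_subset_Ioc (le_min hx.1 hy.1) (max_le hx.2 hy.2)
  have hfxy : IntegrableOn (fun s => |f s|) (uIoc x y) := (hf.abs.def').mono_set hsub
  calc
    |∫ s in x..y, f s * g s| ≤ ∫ s in uIoc x y, |f s * g s| :=
      intervalIntegral.norm_integral_le_integral_norm_uIoc (f := fun s => f s * g s)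
    _ ≤ ∫ s in uIoc x y, C * |f s| := by
      refine integral_mono_of_nonneg (Eventually.of_forall fun s => abs_nonneg _)
        (hfxy.const_mul C) (ae_restrict_of_forall_mem measurableSet_uIoc fun s hs => ?_)
      dsimp only
      rw [abs_mul, mul_comm]
      gcongr
      exact hg s (uIoc_subset_uIcc hs)
    _ = C * ∫ s in uIoc x y, |f s| := integral_const_mul C _
    _ ≤ C * ∫ s in uIoc a b, |f s| := mul_le_mul_of_nonneg_left (setIntegral_mono_set hf.abs.def'
      (Eventually.of_forall fun s => abs_nonneg _) hsub.eventuallyLE) hC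
    _ = C * ∫ s in a..b, |f s| := by
      rw [uIoc_of_le (hx.1.trans hx.2), intervalIntegral.integral_of_le (hx.1.trans hx.2)]

/-- The general solution `A r ^ ν + B r ^ (-ν)`, `ν ≠ 0`, of the Bessel-type equation of order `ν`
with `q = 0`. With `A, B > 0` it is the comparison function for solutions with general `q`. -/
def freeSolution (ν A B r : ℝ) : ℝ := A * r ^ ν + B * r ^ (-ν)

theorem freeSolution_neg (ν A B : ℝ) : freeSolution (-ν) B A = freeSolution ν A B := by
  funext r
  rw [freeSolution, freeSolution, neg_neg, add_comm]

theorem freeSolution_pos {ν A B r : ℝ} (hA : 0 < A) (hB : 0 < B) (hr : 0 < r) :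
    0 < freeSolution ν A B r := by
  unfold freeSolution
  positivity

theorem continuousOn_freeSolution (ν A B : ℝ) : ContinuousOn (freeSolution ν A B) (Ioi 0) := by
  have hpow (p : ℝ) : ContinuousOn (fun r : ℝ => r ^ p) (Ioi 0) :=
    continuousOn_id.rpow_const fun r hr => .inl (ne_of_gt hr)
  exact ((hpow ν).const_mul A).add ((hpow (-ν)).const_mul B)

theorem freeSolution_mul_rpow_neg (ν A B : ℝ) {r : ℝ} (hr : 0 < r) :
    freeSolution ν A B r * r ^ (-ν) = A + B * r ^ (-(2 * ν)) := by
  have h₁ : r ^ ν * r ^ (-ν) = 1 := by rw [← Real.rpow_add hr, add_neg_cancel, Real.rpow_zero]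
  have h₂ : r ^ (-(2 * ν)) = r ^ (-ν) * r ^ (-ν) := by rw [← Real.rpow_add hr]; ring_nf
  rw [freeSolution, h₂]
  linear_combination A * h₁

theorem antitoneOn_freeSolution_mul_rpow_neg {ν B : ℝ} (hν : 0 ≤ ν) (hB : 0 ≤ B) (A : ℝ) :
    AntitoneOn (fun r => freeSolution ν A B r * r ^ (-ν)) (Ioi 0) := by
  intro x hx y hy hxy
  dsimp only
  rw [freeSolution_mul_rpow_neg ν A B hx, freeSolution_mul_rpow_neg ν A B hy]
  gcongr A + B * ?_
  exact Real.rpow_le_rpow_of_nonpos hx hxy (by linarith)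

theorem monotoneOn_freeSolution_mul_rpow {ν A : ℝ} (hν : 0 ≤ ν) (hA : 0 ≤ A) (B : ℝ) :
    MonotoneOn (fun r => freeSolution ν A B r * r ^ ν) (Ioi 0) := by
  intro x hx y hy hxy
  have hmul {r : ℝ} (hr : 0 < r) : freeSolution ν A B r * r ^ ν = B + A * r ^ (2 * ν) := by
    have := freeSolution_mul_rpow_neg (-ν) B A hr
    rwa [freeSolution_neg, neg_neg, mul_neg, neg_neg] at this
  dsimp only
  rw [hmul hx, hmul hy]
  have hx0 : (0 : ℝ) ≤ x := le_of_lt hx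
  gcongr

/-- The Bessel-type equation `-r⁻¹ (r ψ')' + ν² r⁻² ψ + q ψ = 0` on `(0, r₀)` as a first-order
system for the pair `(ψ, v)`, where `v` stands for `r ψ'`. Carrying `v` as a function of its own
makes the system linear in `(ψ, v)` and avoids `deriv`. -/
structure BesselSystem (ν r₀ : ℝ) (q ψ v : ℝ → ℝ) : Prop where
  hasDerivAt_fst : ∀ r ∈ Ioo 0 r₀, HasDerivAt ψ (v r / r) r
  hasDerivAt_snd : ∀ r ∈ Ioo 0 r₀, HasDerivAt v ((ν ^ 2 / r + r * q r) * ψ r) r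

namespace BesselSystem

variable {ν r₀ : ℝ} {q ψ v : ℝ → ℝ}

theorem of_contDiffOn (hψ : ContDiffOn ℝ 2 ψ (Ioo 0 r₀))
    (heq : ∀ r ∈ Ioo (0 : ℝ) r₀,
      -r⁻¹ * deriv (fun s => s * deriv ψ s) r + ν ^ 2 * r⁻¹ ^ 2 * ψ r + q r * ψ r = 0) :
    BesselSystem ν r₀ q ψ fun r => r * deriv ψ r where
  hasDerivAt_fst r hr := by
    rw [mul_div_cancel_left₀ _ hr.1.ne']
    exact ((hψ.differentiableOn two_ne_zero).differentiableAt (isOpen_Ioo.mem_nhds hr)).hasDerivAt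
  hasDerivAt_snd r hr := by
    have hψ' : ContDiffOn ℝ 1 (deriv ψ) (Ioo 0 r₀) := hψ.deriv_of_isOpen isOpen_Ioo le_rfl
    have hψ'r : DifferentiableAt ℝ (deriv ψ) r :=
      (hψ'.differentiableOn one_ne_zero).differentiableAt (isOpen_Ioo.mem_nhds hr)
    have hderiv : deriv (fun s => s * deriv ψ s) r = (ν ^ 2 / r + r * q r) * ψ r := by
      have hr₀ := hr.1.ne'
      have := heq r hr
      field_simp at this ⊢
      linarith
    rw [← hderiv]
    exact (differentiableAt_fun_id.fun_mul hψ'r).hasDerivAt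

theorem const_mul_add_const_mul {ψ₁ ψ₂ v₁ v₂ : ℝ → ℝ} (h₁ : BesselSystem ν r₀ q ψ₁ v₁)
    (h₂ : BesselSystem ν r₀ q ψ₂ v₂) (c₁ c₂ : ℝ) :
    BesselSystem ν r₀ q (fun r => c₁ * ψ₁ r + c₂ * ψ₂ r) fun r => c₁ * v₁ r + c₂ * v₂ r where
  hasDerivAt_fst r hr :=
    (((h₁.hasDerivAt_fst r hr).const_mul c₁).fun_add
      ((h₂.hasDerivAt_fst r hr).const_mul c₂)).congr_deriv (by ring)
  hasDerivAt_snd r hr :=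
    (((h₁.hasDerivAt_snd r hr).const_mul c₁).fun_add
      ((h₂.hasDerivAt_snd r hr).const_mul c₂)).congr_deriv (by ring)

theorem neg_order (h : BesselSystem ν r₀ q ψ v) : BesselSystem (-ν) r₀ q ψ v where
  hasDerivAt_fst := h.hasDerivAt_fst
  hasDerivAt_snd := by simpa only [neg_sq] using h.hasDerivAt_snd

theorem continuousOn (h : BesselSystem ν r₀ q ψ v) : ContinuousOn ψ (Ioo 0 r₀) :=
  HasDerivAt.continuousOn h.hasDerivAt_fst

theorem hasDerivAt_mul_rpow_neg (h : BesselSystem ν r₀ q ψ v) {r : ℝ} (hr : r ∈ Ioo 0 r₀) :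
    HasDerivAt (fun s => (v s + ν * ψ s) * s ^ (-ν)) (r * q r * (ψ r * r ^ (-ν))) r := by
  have hr0 : r ≠ 0 := hr.1.ne'
  refine (((h.hasDerivAt_snd r hr).fun_add ((h.hasDerivAt_fst r hr).const_mul ν)).fun_mul
    (Real.hasDerivAt_rpow_const (p := -ν) (.inl hr0))).congr_deriv ?_
  rw [Real.rpow_sub_one hr0]
  field_simp
  ring

theorem integral_eq_sub (h : BesselSystem ν r₀ q ψ v) (hq : ContinuousOn q (Ioo 0 r₀)) {x y : ℝ}
    (hx : x ∈ Ioo 0 r₀) (hy : y ∈ Ioo 0 r₀) :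
    ∫ s in x..y, s * q s * (ψ s * s ^ (-ν)) =
      (v y + ν * ψ y) * y ^ (-ν) - (v x + ν * ψ x) * x ^ (-ν) := by
  have hsub : uIcc x y ⊆ Ioo 0 r₀ := ordConnected_Ioo.uIcc_subset hx hy
  refine intervalIntegral.integral_eq_sub_of_hasDerivAt
    (fun s hs => h.hasDerivAt_mul_rpow_neg (hsub hs)) (ContinuousOn.intervalIntegrable ?_)
  refine ContinuousOn.mono ?_ hsub
  exact (continuousOn_id.mul hq).mul (h.continuousOn.mul
    (continuousOn_id.rpow_const fun s hs => .inl hs.1.ne'))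

theorem abs_add_le_of_forall_uIcc (h : BesselSystem ν r₀ q ψ v) (hq : ContinuousOn q (Ioo 0 r₀))
    {a b x y A C : ℝ} (ha : 0 < a) (hb : b < r₀)
    (hx : x ∈ Icc a b) (hy : y ∈ Icc a b) (hA : |v y + ν * ψ y| ≤ A * y ^ ν)
    (hC : ∀ s ∈ uIcc x y, |ψ s| * s ^ (-ν) ≤ C * x ^ (-ν)) :
    |v x + ν * ψ x| ≤ A * x ^ ν + C * ∫ s in a..b, |s * q s| := by
  have hsub : Icc a b ⊆ Ioo 0 r₀ := Icc_subset_Ioo ha hb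
  have hx0 : 0 < x := (hsub hx).1
  have hy0 : 0 < y := (hsub hy).1
  have hint : |∫ s in x..y, s * q s * (ψ s * s ^ (-ν))| ≤
      C * x ^ (-ν) * ∫ s in a..b, |s * q s| := by
    refine abs_intervalIntegral_mul_le (ContinuousOn.intervalIntegrable ?_) hx hy fun s hs => ?_
    · rw [uIcc_of_le (hx.1.trans hx.2)]
      exact (continuousOn_id.mul hq).mono hsub
    · have hs0 : 0 < s := (hsub (ordConnected_Icc.uIcc_subset hx hy hs)).1
      rw [abs_mul, abs_of_pos (Real.rpow_pos_of_pos hs0 _)]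
      exact hC s hs
  have hcancel {z : ℝ} (hz : 0 < z) : z ^ ν * z ^ (-ν) = 1 := by
    rw [← Real.rpow_add hz, add_neg_cancel, Real.rpow_zero]
  have habs {z : ℝ} (hz : 0 < z) :
      |(v z + ν * ψ z) * z ^ (-ν)| = |v z + ν * ψ z| * z ^ (-ν) := by
    rw [abs_mul, abs_of_pos (Real.rpow_pos_of_pos hz _)]
  refine le_of_mul_le_mul_right ?_ (Real.rpow_pos_of_pos hx0 (-ν))
  calc
    |v x + ν * ψ x| * x ^ (-ν)
      = |(v y + ν * ψ y) * y ^ (-ν) - ∫ s in x..y, s * q s * (ψ s * s ^ (-ν))| := by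
      rw [h.integral_eq_sub hq (hsub hx) (hsub hy), sub_sub_cancel, habs hx0]
    _ ≤ |v y + ν * ψ y| * y ^ (-ν) + |∫ s in x..y, s * q s * (ψ s * s ^ (-ν))| := by
      rw [← habs hy0]
      exact abs_sub _ _
    _ ≤ A * y ^ ν * y ^ (-ν) + C * x ^ (-ν) * ∫ s in a..b, |s * q s| := by gcongr
    _ = (A * x ^ ν + C * ∫ s in a..b, |s * q s|) * x ^ (-ν) := by
      linear_combination A * hcancel hy0 - A * hcancel hx0

theorem abs_add_le_freeSolution (h : BesselSystem ν r₀ q ψ v) (hq : ContinuousOn q (Ioo 0 r₀))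
    {a b A B M : ℝ} (hν : 0 ≤ ν) (ha : 0 < a) (hb : b < r₀) (hB : 0 ≤ B) (hM : 0 ≤ M)
    (hvb : |v b + ν * ψ b| ≤ A * b ^ ν)
    (hψ : ∀ s ∈ Icc a b, |ψ s| ≤ M * freeSolution ν A B s) :
    ∀ x ∈ Icc a b, |v x + ν * ψ x| ≤
      A * x ^ ν + M * freeSolution ν A B x * ∫ s in a..b, |s * q s| := by
  intro x hx
  have hx0 : 0 < x := ha.trans_le hx.1
  refine h.abs_add_le_of_forall_uIcc hq ha hb hx (right_mem_Icc.2 (hx.1.trans hx.2)) hvb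
    fun s hs => ?_
  rw [uIcc_of_le hx.2] at hs
  have hs0 : 0 < s := hx0.trans_le hs.1
  calc
    |ψ s| * s ^ (-ν) ≤ M * freeSolution ν A B s * s ^ (-ν) := by
      gcongr
      exact hψ s ⟨hx.1.trans hs.1, hs.2⟩
    _ = M * (freeSolution ν A B s * s ^ (-ν)) := mul_assoc _ _ _
    _ ≤ M * (freeSolution ν A B x * x ^ (-ν)) :=
      mul_le_mul_of_nonneg_left (antitoneOn_freeSolution_mul_rpow_neg hν hB A hx0 hs0 hs.1) hM
    _ = M * freeSolution ν A B x * x ^ (-ν) := (mul_assoc _ _ _).symm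

theorem abs_sub_le_freeSolution (h : BesselSystem ν r₀ q ψ v) (hq : ContinuousOn q (Ioo 0 r₀))
    {a b A B M : ℝ} (hν : 0 ≤ ν) (ha : 0 < a) (hb : b < r₀) (hA : 0 ≤ A) (hM : 0 ≤ M)
    (hva : |v a - ν * ψ a| ≤ B * a ^ (-ν))
    (hψ : ∀ s ∈ Icc a b, |ψ s| ≤ M * freeSolution ν A B s) :
    ∀ x ∈ Icc a b, |v x - ν * ψ x| ≤
      B * x ^ (-ν) + M * freeSolution ν A B x * ∫ s in a..b, |s * q s| := by
  intro x hx
  have hx0 : 0 < x := ha.trans_le hx.1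
  rw [sub_eq_add_neg, ← neg_mul] at hva ⊢
  refine h.neg_order.abs_add_le_of_forall_uIcc hq ha hb hx (left_mem_Icc.2 (hx.1.trans hx.2)) hva
    fun s hs => ?_
  rw [uIcc_of_ge hx.1] at hs
  have hs0 : 0 < s := ha.trans_le hs.1
  rw [neg_neg]
  calc
    |ψ s| * s ^ ν ≤ M * freeSolution ν A B s * s ^ ν := by
      gcongr
      exact hψ s ⟨hs.1, hs.2.trans hx.2⟩
    _ = M * (freeSolution ν A B s * s ^ ν) := mul_assoc _ _ _
    _ ≤ M * (freeSolution ν A B x * x ^ ν) :=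
      mul_le_mul_of_nonneg_left (monotoneOn_freeSolution_mul_rpow hν hA B hs0 hx0 hs.2) hM
    _ = M * freeSolution ν A B x * x ^ ν := (mul_assoc _ _ _).symm

section Estimates

variable {a b A B : ℝ}

theorem abs_fst_le_inv_mul_freeSolution (h : BesselSystem ν r₀ q ψ v)
    (hq : ContinuousOn q (Ioo 0 r₀)) (hν : 0 < ν) (ha : 0 < a) (hab : a ≤ b) (hb : b < r₀)
    (hA : 0 < A) (hB : 0 < B)
    (hvb : |v b + ν * ψ b| ≤ A * b ^ ν) (hva : |v a - ν * ψ a| ≤ B * a ^ (-ν))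
    (hK : ∫ s in a..b, |s * q s| ≤ ν / 2) :
    ∀ x ∈ Icc a b, |ψ x| ≤ ν⁻¹ * freeSolution ν A B x := by
  have hw {x : ℝ} (hx : x ∈ Icc a b) : 0 < freeSolution ν A B x :=
    freeSolution_pos hA hB (ha.trans_le hx.1)
  have hcont : ContinuousOn (fun x => |ψ x| / freeSolution ν A B x) (Icc a b) :=
    (h.continuousOn.mono (Icc_subset_Ioo ha hb)).abs.div
      ((continuousOn_freeSolution ν A B).mono fun x hx => ha.trans_le hx.1) fun x hx => (hw hx).ne'
  obtain ⟨x₀, hx₀, hmax⟩ := isCompact_Icc.exists_isMaxOn (nonempty_Icc.2 hab) hcont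
  set M := |ψ x₀| / freeSolution ν A B x₀ with hM
  have hM0 : 0 ≤ M := div_nonneg (abs_nonneg _) (hw hx₀).le
  have hψM : ∀ x ∈ Icc a b, |ψ x| ≤ M * freeSolution ν A B x := fun x hx =>
    (div_le_iff₀ (hw hx)).1 (hmax hx)
  have hMν : M ≤ ν⁻¹ := by
    have hplus := h.abs_add_le_freeSolution hq hν.le ha hb hB.le hM0 hvb hψM x₀ hx₀
    have hminus := h.abs_sub_le_freeSolution hq hν.le ha hb hA.le hM0 hva hψM x₀ hx₀
    have hself : 2 * ν * M * freeSolution ν A B x₀ ≤ (1 + ν * M) * freeSolution ν A B x₀ := calc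
      2 * ν * M * freeSolution ν A B x₀ = 2 * ν * |ψ x₀| := by
        rw [mul_assoc, hM, div_mul_cancel₀ _ (hw hx₀).ne']
      _ ≤ |v x₀ + ν * ψ x₀| + |v x₀ - ν * ψ x₀| := two_mul_mul_abs_le hν.le _ _
      _ ≤ freeSolution ν A B x₀ +
          2 * (M * freeSolution ν A B x₀ * ∫ s in a..b, |s * q s|) := by
        rw [freeSolution] at hplus hminus ⊢
        linarith
      _ ≤ freeSolution ν A B x₀ + 2 * (M * freeSolution ν A B x₀ * (ν / 2)) := by
        have := hw hx₀
        gcongr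
      _ = (1 + ν * M) * freeSolution ν A B x₀ := by ring
    have hνM : ν * M ≤ 1 := by linarith [le_of_mul_le_mul_right hself (hw hx₀)]
    rwa [← one_div, le_div_iff₀' hν]
  exact fun x hx => (hψM x hx).trans (mul_le_mul_of_nonneg_right hMν (hw hx).le)

theorem abs_add_le_and_abs_sub_le_of_endpoints (h : BesselSystem ν r₀ q ψ v)
    (hq : ContinuousOn q (Ioo 0 r₀)) (hν : 0 < ν) (ha : 0 < a) (hab : a ≤ b) (hb : b < r₀)
    (hA : 0 < A) (hB : 0 < B)
    (hvb : |v b + ν * ψ b| ≤ A * b ^ ν) (hva : |v a - ν * ψ a| ≤ B * a ^ (-ν))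
    (hK : ∫ s in a..b, |s * q s| ≤ ν / 2) :
    ∀ x ∈ Icc a b, |v x + ν * ψ x| ≤ A * x ^ ν + freeSolution ν A B x / 2 ∧
      |v x - ν * ψ x| ≤ B * x ^ (-ν) + freeSolution ν A B x / 2 := by
  intro x hx
  have hψ := h.abs_fst_le_inv_mul_freeSolution hq hν ha hab hb hA hB hvb hva hK
  have hw : 0 < freeSolution ν A B x := freeSolution_pos hA hB (ha.trans_le hx.1)
  have hhalf : ν⁻¹ * freeSolution ν A B x * ∫ s in a..b, |s * q s| ≤ freeSolution ν A B x / 2 :=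
    calc
      _ ≤ ν⁻¹ * freeSolution ν A B x * (ν / 2) := by gcongr
      _ = freeSolution ν A B x / 2 := by field_simp
  have hν' : 0 ≤ ν⁻¹ := inv_nonneg.2 hν.le
  exact ⟨(h.abs_add_le_freeSolution hq hν.le ha hb hB.le hν' hvb hψ x hx).trans (by gcongr),
    (h.abs_sub_le_freeSolution hq hν.le ha hb hA.le hν' hva hψ x hx).trans (by gcongr)⟩

theorem abs_sub_le_add_abs_fst (h : BesselSystem ν r₀ q ψ v) (hq : ContinuousOn q (Ioo 0 r₀))
    (hν : 0 < ν) (ha : 0 < a) (hab : a ≤ b) (hb : b < r₀) (hA : 0 < A)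
    (hvb : |v b + ν * ψ b| ≤ A * b ^ ν) (hK : ∫ s in a..b, |s * q s| ≤ ν / 2) :
    |v a - ν * ψ a| ≤ 3 * A * a ^ ν + 4 * ν * |ψ a| := by
  have haν : 0 < a ^ ν := Real.rpow_pos_of_pos ha ν
  obtain hzero | hpos := (abs_nonneg (v a - ν * ψ a)).eq_or_lt
  · rw [← hzero]
    positivity
  have hcancel : |v a - ν * ψ a| * a ^ ν * a ^ (-ν) = |v a - ν * ψ a| := by
    rw [Real.rpow_neg ha.le, mul_inv_cancel_right₀ haν.ne']
  have hplus := (h.abs_add_le_and_abs_sub_le_of_endpoints hq hν ha hab hb hA (mul_pos hpos haν) hvb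
    hcancel.ge hK a (left_mem_Icc.2 hab)).1
  have htri : |v a - ν * ψ a| ≤ |v a + ν * ψ a| + 2 * ν * |ψ a| := calc
    _ = |(v a + ν * ψ a) - 2 * ν * ψ a| := by ring_nf
    _ ≤ |v a + ν * ψ a| + |2 * ν * ψ a| := abs_sub _ _
    _ = |v a + ν * ψ a| + 2 * ν * |ψ a| := by
      rw [abs_mul, abs_of_pos (by positivity : 0 < 2 * ν)]
  rw [freeSolution, hcancel] at hplus
  linarith

end Estimates

section Limits

variable {b : ℝ} {l : Filter ℝ}

theorem tendsto_sub_mul_rpow (h : BesselSystem ν r₀ q ψ v) (hq : ContinuousOn q (Ioo 0 r₀))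
    (hν : 0 < ν) (hb : b ∈ Ioo 0 r₀) (hK : ∀ a ∈ Ioc 0 b, ∫ s in a..b, |s * q s| ≤ ν / 2)
    (hl : l ≤ 𝓝[>] 0) (hψ : Tendsto (fun a => ψ a * a ^ ν) l (𝓝 0)) :
    Tendsto (fun a => (v a - ν * ψ a) * a ^ ν) l (𝓝 0) := by
  set A := |v b + ν * ψ b| * b ^ (-ν) + 1 with hAdef
  have hbν : 0 < b ^ ν := Real.rpow_pos_of_pos hb.1 ν
  have hA : 0 < A := by
    have := hb.1
    positivity
  have hvb : |v b + ν * ψ b| ≤ A * b ^ ν := by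
    rw [hAdef, Real.rpow_neg hb.1.le, add_mul, inv_mul_cancel_right₀ hbν.ne']
    linarith
  have hpow : Tendsto (fun a : ℝ => a ^ ν) l (𝓝 0) := (tendsto_rpow_nhdsGT_zero hν).mono_left hl
  have hbound : Tendsto (fun a => 3 * A * (a ^ ν * a ^ ν) + 4 * ν * |ψ a * a ^ ν|) l (𝓝 0) := by
    simpa using ((hpow.mul hpow).const_mul (3 * A)).add (hψ.abs.const_mul (4 * ν))
  refine squeeze_zero_norm' (hl ?_) hbound
  filter_upwards [Ioc_mem_nhdsGT hb.1] with a ha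
  have haν : 0 < a ^ ν := Real.rpow_pos_of_pos ha.1 ν
  have := h.abs_sub_le_add_abs_fst hq hν ha.1 ha.2 hb.2 hA hvb (hK a ha)
  rw [Real.norm_eq_abs, abs_mul, abs_mul, abs_of_pos haν]
  calc
    _ ≤ (3 * A * a ^ ν + 4 * ν * |ψ a|) * a ^ ν := by gcongr
    _ = 3 * A * (a ^ ν * a ^ ν) + 4 * ν * (|ψ a| * a ^ ν) := by ring

theorem abs_add_le_and_abs_sub_le_of_tendsto [l.NeBot] (h : BesselSystem ν r₀ q ψ v)
    (hq : ContinuousOn q (Ioo 0 r₀)) (hν : 0 < ν) (hb : b ∈ Ioo 0 r₀)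
    (hK : ∀ a ∈ Ioc 0 b, ∫ s in a..b, |s * q s| ≤ ν / 2) (hl : l ≤ 𝓝[>] 0)
    (hψ : Tendsto (fun a => ψ a * a ^ ν) l (𝓝 0)) {A : ℝ} (hA : |v b + ν * ψ b| ≤ A * b ^ ν) :
    ∀ x ∈ Ioc 0 b, |v x + ν * ψ x| ≤ 3 / 2 * A * x ^ ν ∧ |v x - ν * ψ x| ≤ A / 2 * x ^ ν := by
  -- `a` is added to both data because the estimate on `[a, b]` needs them positive.
  intro x hx
  have hA0 : 0 ≤ A := nonneg_of_mul_nonneg_left ((abs_nonneg _).trans hA)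
    (Real.rpow_pos_of_pos hb.1 ν)
  have hid : Tendsto (fun a : ℝ => a) l (𝓝 0) := hl.trans nhdsWithin_le_nhds
  have hAlim : Tendsto (fun a => A + a) l (𝓝 A) := by simpa using hid.const_add A
  have hBlim : Tendsto (fun a => |v a - ν * ψ a| * a ^ ν + a) l (𝓝 0) := by
    have hsum := (h.tendsto_sub_mul_rpow hq hν hb hK hl hψ).abs.add hid
    rw [abs_zero, add_zero] at hsum
    refine hsum.congr' (hl ?_)
    filter_upwards [self_mem_nhdsWithin] with a ha
    rw [abs_mul, abs_of_pos (Real.rpow_pos_of_pos ha ν)]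
  have hwlim : Tendsto (fun a => freeSolution ν (A + a) (|v a - ν * ψ a| * a ^ ν + a) x / 2) l
      (𝓝 (A * x ^ ν / 2)) := by
    simpa [freeSolution] using
      ((hAlim.mul_const (x ^ ν)).add (hBlim.mul_const (x ^ (-ν)))).div_const 2
  have hbound : ∀ᶠ a in l,
      |v x + ν * ψ x| ≤ (A + a) * x ^ ν +
        freeSolution ν (A + a) (|v a - ν * ψ a| * a ^ ν + a) x / 2 ∧
      |v x - ν * ψ x| ≤ (|v a - ν * ψ a| * a ^ ν + a) * x ^ (-ν) +
        freeSolution ν (A + a) (|v a - ν * ψ a| * a ^ ν + a) x / 2 := by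
    filter_upwards [hl (Ioc_mem_nhdsGT hx.1)] with a ha
    have hab : a ≤ b := ha.2.trans hx.2
    have haν : 0 < a ^ ν := Real.rpow_pos_of_pos ha.1 ν
    refine h.abs_add_le_and_abs_sub_le_of_endpoints hq hν ha.1 hab hb.2 (by linarith [ha.1])
      (add_pos_of_nonneg_of_pos (by positivity) ha.1) ?_ ?_ (hK a ⟨ha.1, hab⟩) x ⟨ha.2, hx.2⟩
    · refine hA.trans (mul_le_mul_of_nonneg_right ?_ (Real.rpow_nonneg hb.1.le ν))
      linarith [ha.1]
    · rw [Real.rpow_neg ha.1.le, ← div_eq_mul_inv, le_div_iff₀ haν]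
      linarith [ha.1]
  constructor
  · exact (ge_of_tendsto ((hAlim.mul_const _).add hwlim) (hbound.mono fun _ => And.left)).trans_eq
      (by ring)
  · exact (ge_of_tendsto ((hBlim.mul_const _).add hwlim) (hbound.mono fun _ => And.right)).trans_eq
      (by ring)

end Limits

theorem isBigO_rpow (h : BesselSystem ν r₀ q ψ v) (hq : ContinuousOn q (Ioo 0 r₀))
    (hν : 0 < ν) (hr₀ : 0 < r₀) (hqi : IntegrableAtFilter (fun r => r * q r) (𝓝[>] 0))
    (hψ : MapClusterPt 0 (𝓝[>] 0) fun r => ψ r * r ^ ν) :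
    ψ =O[𝓝[>] 0] (fun r : ℝ => r ^ ν) ∧ v =O[𝓝[>] 0] (fun r : ℝ => r ^ ν) := by
  obtain ⟨b, hK, hb⟩ := ((eventually_integral_norm_le_of_integrableAtFilter hqi
    (half_pos hν)).and (Ioo_mem_nhdsGT hr₀)).exists
  obtain ⟨l, hl, hlim⟩ := mapClusterPt_iff_ultrafilter.1 hψ
  have hbound := h.abs_add_le_and_abs_sub_le_of_tendsto hq hν hb hK hl hlim
    (div_mul_cancel₀ _ (Real.rpow_pos_of_pos hb.1 ν).ne').ge
  set A := |v b + ν * ψ b| / b ^ ν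
  have hplus : (fun r => v r + ν * ψ r) =O[𝓝[>] 0] fun r : ℝ => r ^ ν := by
    refine IsBigO.of_bound (3 / 2 * A) ?_
    filter_upwards [Ioc_mem_nhdsGT hb.1] with r hr
    simpa only [Real.norm_eq_abs, abs_of_pos (Real.rpow_pos_of_pos hr.1 ν)] using (hbound r hr).1
  have hminus : (fun r => v r - ν * ψ r) =O[𝓝[>] 0] fun r : ℝ => r ^ ν := by
    refine IsBigO.of_bound (A / 2) ?_
    filter_upwards [Ioc_mem_nhdsGT hb.1] with r hr
    simpa only [Real.norm_eq_abs, abs_of_pos (Real.rpow_pos_of_pos hr.1 ν)] using (hbound r hr).2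
  refine ⟨((hplus.sub hminus).const_mul_left (2 * ν)⁻¹).congr_left fun r => ?_,
    ((hplus.add hminus).const_mul_left 2⁻¹).congr_left fun r => ?_⟩
  · field_simp
    ring
  · ring

theorem eqOn_zero_of_apply_eq_zero (h : BesselSystem ν r₀ q ψ v)
    (hq : ContinuousOn q (Ioo 0 r₀)) {b : ℝ} (hb : b ∈ Ioo 0 r₀) (hψb : ψ b = 0) (hvb : v b = 0) :
    EqOn ψ 0 (Ioo 0 r₀) := by
  let toFst : ℝ × ℝ →L[ℝ] ℝ × ℝ := .comp (.inl ℝ ℝ ℝ) (.snd ℝ ℝ ℝ)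
  let toSnd : ℝ × ℝ →L[ℝ] ℝ × ℝ := .comp (.inr ℝ ℝ ℝ) (.fst ℝ ℝ ℝ)
  have hne : ∀ r ∈ Ioo 0 r₀, r ≠ 0 := fun r hr => hr.1.ne'
  have hL : ContinuousOn (fun r => r⁻¹ • toFst + (ν ^ 2 / r + r * q r) • toSnd) (Ioo 0 r₀) :=
    ((continuousOn_id.inv₀ hne).smul continuousOn_const).add
      (((continuousOn_const.div continuousOn_id hne).add (continuousOn_id.mul hq)).smul
        continuousOn_const)
  have hzero := eqOn_zero_of_hasDerivAt_clm hL (f := fun r => (ψ r, v r)) (fun r hr => ?_) hb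
    (Prod.ext hψb hvb)
  · exact fun r hr => congrArg Prod.fst (hzero hr)
  · refine ((h.hasDerivAt_fst r hr).prodMk (h.hasDerivAt_snd r hr)).congr_deriv ?_
    simp [toFst, toSnd, div_eq_inv_mul]

theorem eqOn_zero_of_tendsto (h : BesselSystem ν r₀ q ψ v) (hq : ContinuousOn q (Ioo 0 r₀))
    (hν : 0 < ν) {b : ℝ} (hb : b ∈ Ioo 0 r₀)
    (hK : ∀ a ∈ Ioc 0 b, ∫ s in a..b, |s * q s| ≤ ν / 2)
    (hψ : Tendsto (fun r => ψ r * r ^ ν) (𝓝[>] 0) (𝓝 0)) (hvb : v b + ν * ψ b = 0) :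
    EqOn ψ 0 (Ioo 0 r₀) := by
  have hminus : v b - ν * ψ b = 0 := by
    simpa using (h.abs_add_le_and_abs_sub_le_of_tendsto hq hν hb hK le_rfl hψ (A := 0)
      (by simp [hvb]) b (right_mem_Ioc.2 hb.1)).2
  have hψb : ψ b = 0 := (mul_eq_zero.1 (by linarith : ν * ψ b = 0)).resolve_left hν.ne'
  exact h.eqOn_zero_of_apply_eq_zero hq hb hψb (by linarith)

theorem exists_ne_zero_mul_add_mul_eq_zero {ψ₁ ψ₂ v₁ v₂ : ℝ → ℝ} (h₁ : BesselSystem ν r₀ q ψ₁ v₁)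
    (h₂ : BesselSystem ν r₀ q ψ₂ v₂) (hq : ContinuousOn q (Ioo 0 r₀))
    (hν : 0 < ν) (hr₀ : 0 < r₀) (hqi : IntegrableAtFilter (fun r => r * q r) (𝓝[>] 0))
    (hψ₁ : MapClusterPt 0 (𝓝[>] 0) fun r => ψ₁ r * r ^ ν)
    (hψ₂ : MapClusterPt 0 (𝓝[>] 0) fun r => ψ₂ r * r ^ ν) :
    ∃ c₁ c₂ : ℝ, (c₁ ≠ 0 ∨ c₂ ≠ 0) ∧ ∀ r ∈ Ioo 0 r₀, c₁ * ψ₁ r + c₂ * ψ₂ r = 0 := by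
  obtain ⟨b, hK, hb⟩ := ((eventually_integral_norm_le_of_integrableAtFilter hqi
    (half_pos hν)).and (Ioo_mem_nhdsGT hr₀)).exists
  obtain ⟨c₁, c₂, hc, hcb⟩ : ∃ c₁ c₂ : ℝ, (c₁ ≠ 0 ∨ c₂ ≠ 0) ∧
      c₁ * (v₁ b + ν * ψ₁ b) + c₂ * (v₂ b + ν * ψ₂ b) = 0 := by
    by_cases hzero : v₁ b + ν * ψ₁ b = 0
    · exact ⟨1, 0, .inl one_ne_zero, by simp [hzero]⟩
    · exact ⟨-(v₂ b + ν * ψ₂ b), v₁ b + ν * ψ₁ b, .inr hzero, by ring⟩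
  have hbigO := ((h₁.isBigO_rpow hq hν hr₀ hqi hψ₁).1.const_mul_left c₁).add
    ((h₂.isBigO_rpow hq hν hr₀ hqi hψ₂).1.const_mul_left c₂)
  exact ⟨c₁, c₂, hc, (h₁.const_mul_add_const_mul h₂ c₁ c₂).eqOn_zero_of_tendsto hq hν hb hK
    (tendsto_mul_rpow_zero_of_isBigO hν hbigO) (by linear_combination hcb)⟩

end BesselSystem

theorem bessel_L2_solution_unique_general (ν : ℝ) (hν : 1 ≤ ν) (r₀ : ℝ) (hr₀ : 0 < r₀)
    (q : ℝ → ℝ) (hq : ContinuousOn q (Ioo 0 r₀))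
    (hqi : IntegrableAtFilter (fun r => r * q r) (𝓝[>] 0))
    (ψ₁ ψ₂ : ℝ → ℝ)
    (hψ₁C : ContDiffOn ℝ 2 ψ₁ (Ioo 0 r₀))
    (hψ₁eq : ∀ r ∈ Ioo (0 : ℝ) r₀,
      -r⁻¹ * deriv (fun s => s * deriv ψ₁ s) r + ν ^ 2 * r⁻¹ ^ 2 * ψ₁ r + q r * ψ₁ r = 0)
    (hψ₁L2 : IntegrableAtFilter (fun r => ψ₁ r ^ 2 * r) (𝓝[>] 0))
    (hψ₂C : ContDiffOn ℝ 2 ψ₂ (Ioo 0 r₀))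
    (hψ₂eq : ∀ r ∈ Ioo (0 : ℝ) r₀,
      -r⁻¹ * deriv (fun s => s * deriv ψ₂ s) r + ν ^ 2 * r⁻¹ ^ 2 * ψ₂ r + q r * ψ₂ r = 0)
    (hψ₂L2 : IntegrableAtFilter (fun r => ψ₂ r ^ 2 * r) (𝓝[>] 0)) :
    (∃ c₁ c₂ : ℝ, (c₁ ≠ 0 ∨ c₂ ≠ 0) ∧ ∀ r ∈ Ioo (0 : ℝ) r₀, c₁ * ψ₁ r + c₂ * ψ₂ r = 0) ∧
    (∀ ψ : ℝ → ℝ, ContDiffOn ℝ 2 ψ (Ioo 0 r₀) →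
      (∀ r ∈ Ioo (0 : ℝ) r₀,
        -r⁻¹ * deriv (fun s => s * deriv ψ s) r + ν ^ 2 * r⁻¹ ^ 2 * ψ r + q r * ψ r = 0) →
      IntegrableAtFilter (fun r => ψ r ^ 2 * r) (𝓝[>] 0) →
      (ψ =O[𝓝[>] 0] fun r : ℝ => r ^ ν) ∧ (deriv ψ =O[𝓝[>] 0] fun r : ℝ => r ^ (ν - 1))) := by
  have hν0 : 0 < ν := one_pos.trans_le hν
  constructor
  · exact (BesselSystem.of_contDiffOn hψ₁C hψ₁eq).exists_ne_zero_mul_add_mul_eq_zero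
      (BesselSystem.of_contDiffOn hψ₂C hψ₂eq) hq hν0 hr₀ hqi
      (mapClusterPt_mul_rpow_zero_of_integrableAtFilter hν hψ₁L2)
      (mapClusterPt_mul_rpow_zero_of_integrableAtFilter hν hψ₂L2)
  · intro ψ hψC hψeq hψL2
    obtain ⟨hψ, hderiv⟩ := (BesselSystem.of_contDiffOn hψC hψeq).isBigO_rpow hq hν0 hr₀ hqi
      (mapClusterPt_mul_rpow_zero_of_integrableAtFilter hν hψL2)
    exact ⟨hψ, isBigO_rpow_sub_one_of_id_mul hderiv⟩

/-- Lemma 4.2 of the paper: if `m ≥ 1`, `q` is continuous with `∫₀^{r₀} r q(r)² dr < ∞`, then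
any two solutions of `-r⁻¹ (r y')' + m² r⁻² y + q y = 0` belonging to `L²((0,r₀); r dr)` are
linearly dependent, and every such square-integrable solution `ψ` satisfies `ψ(r) = O(r^m)`
and `ψ'(r) = O(r^{m-1})` as `r → 0`. -/
theorem bessel_L2_solution_unique (m : ℕ) (hm : 1 ≤ m) (r₀ : ℝ) (hr₀ : 0 < r₀)
    (q : ℝ → ℝ) (hq : ContinuousOn q (Set.Ioo 0 r₀))
    (hqi : IntegrableOn (fun r => r * (q r) ^ 2) (Set.Ioo 0 r₀))
    (ψ₁ ψ₂ : ℝ → ℝ)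
    (hψ₁C : ContDiffOn ℝ 2 ψ₁ (Set.Ioo 0 r₀))
    (hψ₁eq : ∀ r ∈ Set.Ioo (0:ℝ) r₀,
      -r⁻¹ * deriv (fun s => s * deriv ψ₁ s) r + (m : ℝ) ^ 2 * r⁻¹ ^ 2 * ψ₁ r
        + q r * ψ₁ r = 0)
    (hψ₁L2 : IntegrableOn (fun r => (ψ₁ r) ^ 2 * r) (Set.Ioo 0 r₀))
    (hψ₂C : ContDiffOn ℝ 2 ψ₂ (Set.Ioo 0 r₀))
    (hψ₂eq : ∀ r ∈ Set.Ioo (0:ℝ) r₀,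
      -r⁻¹ * deriv (fun s => s * deriv ψ₂ s) r + (m : ℝ) ^ 2 * r⁻¹ ^ 2 * ψ₂ r
        + q r * ψ₂ r = 0)
    (hψ₂L2 : IntegrableOn (fun r => (ψ₂ r) ^ 2 * r) (Set.Ioo 0 r₀)) :
    (∃ c₁ c₂ : ℝ, (c₁ ≠ 0 ∨ c₂ ≠ 0) ∧
      ∀ r ∈ Set.Ioo (0:ℝ) r₀, c₁ * ψ₁ r + c₂ * ψ₂ r = 0) ∧
    (∀ ψ : ℝ → ℝ, ContDiffOn ℝ 2 ψ (Set.Ioo 0 r₀) →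
      (∀ r ∈ Set.Ioo (0:ℝ) r₀,
        -r⁻¹ * deriv (fun s => s * deriv ψ s) r + (m : ℝ) ^ 2 * r⁻¹ ^ 2 * ψ r
          + q r * ψ r = 0) →
      IntegrableOn (fun r => (ψ r) ^ 2 * r) (Set.Ioo 0 r₀) →
      (ψ =O[nhdsWithin 0 (Set.Ioi 0)] fun r : ℝ => r ^ m) ∧
      (deriv ψ =O[nhdsWithin 0 (Set.Ioi 0)] fun r : ℝ => r ^ (m - 1))) := by
  have hr₀_mem := Ioo_mem_nhdsGT hr₀
  obtain ⟨hdep, hbigO⟩ := bessel_L2_solution_unique_general m (by exact_mod_cast hm) r₀ hr₀ q hq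
    (integrableAtFilter_id_mul_of_integrableOn_id_mul_sq hr₀ hq hqi) ψ₁ ψ₂
    hψ₁C hψ₁eq ⟨_, hr₀_mem, hψ₁L2⟩ hψ₂C hψ₂eq ⟨_, hr₀_mem, hψ₂L2⟩
  refine ⟨hdep, fun ψ hC heq hL2 => ?_⟩
  simpa only [← Nat.cast_pred hm, Real.rpow_natCast] using hbigO ψ hC heq ⟨_, hr₀_mem, hL2⟩
end
end
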